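/- Let Ω ⊂ ℂ be a bounded domain containing 0 whose boundary is an analytic Jordan curve, and let u be a negative continuous subharmonic exhaustion of Ω with finite Monge–Ampère mass. Then the algebra A(Ω) of functions holomorphic on Ω and continuous on the closure of Ω is dense in the Poletsky–Stessin Hardy space H^p_u(Ω) for every 1 ≤ p < ∞. -/

import Mathlib

open MeasureTheory Filter Metric Complex Set
open scoped Real ENNReal Topology

noncomputable section

/-- The Laplacian of a real-valued function on `ℂ ≅ ℝ²`. -/
def lap (φ : ℂ → ℝ) (z : ℂ) : ℝ :=
  fderiv ℝ (fun w => fderiv ℝ φ w 1) z 1 +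
    fderiv ℝ (fun w => fderiv ℝ φ w Complex.I) z Complex.I

/-- `h` is harmonic on `s`. -/
def HarmonicOn (h : ℂ → ℝ) (s : Set ℂ) : Prop :=
  ContDiffOn ℝ 2 h s ∧ ∀ z ∈ s, lap h z = 0

/-- `u` is subharmonic on `s` (continuous with the sub-mean-value property). -/
def SubharmonicOn (u : ℂ → ℝ) (s : Set ℂ) : Prop :=
  ContinuousOn u s ∧ ∀ z ∈ s, ∀ r : ℝ, 0 < r → closedBall z r ⊆ s →
    u z ≤ (2 * Real.pi)⁻¹ *
      ∫ t in (0:ℝ)..(2 * Real.pi), u (z + (r : ℂ) * Complex.exp ((t : ℂ) * Complex.I))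

/-- `u` is a negative continuous subharmonic exhaustion function for `Ω`:
sublevel sets `{u < c}`, `c < 0`, are relatively compact in `Ω`. -/
structure IsExhaustion (u : ℂ → ℝ) (Ω : Set ℂ) : Prop where
  neg : ∀ z ∈ Ω, u z < 0
  subh : SubharmonicOn u Ω
  exh : ∀ c : ℝ, c < 0 → IsCompact (closure {z | z ∈ Ω ∧ u z < c}) ∧
    closure {z | z ∈ Ω ∧ u z < c} ⊆ Ω

/-- `ν` is the Riesz measure `dd^c u = (1/4) Δu dA` of `u` on `Ω`, characterized
distributionally: `∫ φ dν = (1/4) ∫_Ω u Δφ dA` for test functions `φ`. -/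
def IsRieszMeasure (u : ℂ → ℝ) (Ω : Set ℂ) (ν : Measure ℂ) : Prop :=
  ν Ωᶜ = 0 ∧
  ∀ φ : ℂ → ℝ, ContDiff ℝ 2 φ → HasCompactSupport φ → tsupport φ ⊆ Ω →
    ∫ z, φ z ∂ν = (4 : ℝ)⁻¹ * ∫ z in Ω, u z * lap φ z

/-- `μ` is the Monge–Ampère measure `μ_{u,r} = dd^c max(u,r) - χ_{Ω∖{u<r}} dd^c u`,
where `ν = dd^c u`. -/
def IsMAMeasure (u : ℂ → ℝ) (Ω : Set ℂ) (ν : Measure ℂ) (r : ℝ) (μ : Measure ℂ) : Prop :=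
  ∃ νr : Measure ℂ, IsRieszMeasure (fun z => max (u z) r) Ω νr ∧
    μ = νr - ν.restrict {z | z ∈ Ω ∧ r ≤ u z}

/-- The `p`-th power of the Poletsky–Stessin Hardy "norm",
`limsup_{r→0⁻} ∫ |f|^p dμ_{u,r}`. -/
def psNormPow (p : ℝ) (μfam : ℝ → Measure ℂ) (f : ℂ → ℂ) : ℝ≥0∞ :=
  Filter.limsup (fun r => ∫⁻ z, ENNReal.ofReal (‖f z‖ ^ p) ∂(μfam r))
    (nhdsWithin 0 (Set.Iio 0))

/-- The Poletsky–Stessin Hardy norm. -/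
def psNorm (p : ℝ) (μfam : ℝ → Measure ℂ) (f : ℂ → ℂ) : ℝ≥0∞ :=
  psNormPow p μfam f ^ (1 / p)

/-- Membership in the Poletsky–Stessin Hardy space `H^p_u(Ω)`, where `μfam r = μ_{u,r}`. -/
def MemPS (p : ℝ) (Ω : Set ℂ) (μfam : ℝ → Measure ℂ) (f : ℂ → ℂ) : Prop :=
  DifferentiableOn ℂ f Ω ∧ psNormPow p μfam f < ⊤

/-- Membership in the classical Hardy space `H^p(Ω)`: `|f|^p` has a harmonic majorant. -/
def MemHClassical (p : ℝ) (Ω : Set ℂ) (f : ℂ → ℂ) : Prop :=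
  DifferentiableOn ℂ f Ω ∧
    ∃ h : ℂ → ℝ, HarmonicOn h Ω ∧ ∀ z ∈ Ω, ‖f z‖ ^ p ≤ h z

/-- A bounded domain in `ℂ` containing `0` whose boundary is an analytic Jordan curve:
there is a conformal map of the unit disc onto `Ω` extending analytically and injectively
across the closed disc, carrying the unit circle onto the boundary of `Ω`. -/
structure AnalyticJordanDomain (Ω : Set ℂ) : Prop where
  isOpen : IsOpen Ω
  isConnected : IsConnected Ω
  isBounded : Bornology.IsBounded Ω
  zero_mem : (0:ℂ) ∈ Ω
  analyticBoundary : ∃ (U : Set ℂ) (ψ : ℂ → ℂ), IsOpen U ∧ closedBall (0:ℂ) 1 ⊆ U ∧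
    DifferentiableOn ℂ ψ U ∧ Set.InjOn ψ U ∧ ψ '' ball (0:ℂ) 1 = Ω ∧
    ψ '' sphere (0:ℂ) 1 = frontier Ω

/-- `μ` is the boundary Monge–Ampère measure: the weak* limit of the measures
`μfam r = μ_{u,r}` as `r → 0⁻`. -/
def IsBoundaryMA (μfam : ℝ → Measure ℂ) (μ : Measure ℂ) : Prop :=
  ∀ φ : ℂ → ℝ, Continuous φ →
    Filter.Tendsto (fun r => ∫ z, φ z ∂(μfam r)) (nhdsWithin 0 (Set.Iio 0))
      (nhds (∫ z, φ z ∂μ))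

/-- `f` has nontangential limit `L` at the boundary point `ξ` of `Ω`. -/
def NTLim (Ω : Set ℂ) (f : ℂ → ℂ) (ξ : ℂ) (L : ℂ) : Prop :=
  ∀ C : ℝ, 1 < C →
    Filter.Tendsto f
      (nhdsWithin ξ {z | z ∈ Ω ∧ dist z ξ ≤ C * infDist z (frontier Ω)}) (nhds L)

/-- Arc length measure on the boundary of `Ω` (1-dimensional Hausdorff measure). -/
def arcLen (Ω : Set ℂ) : Measure ℂ := (μH[1] : Measure ℂ).restrict (frontier Ω)


/-- The algebra `A(Ω)` of functions holomorphic on `Ω` and continuous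
on the closure of `Ω` is dense in `H^p_u(Ω)` for `1 ≤ p < ∞`. -/

lemma lap_congr {f g : ℂ → ℝ} {z : ℂ} (h : f =ᶠ[𝓝 z] g) : lap f z = lap g z := by
  have h1 : ∀ v : ℂ, (fun w => fderiv ℝ f w v) =ᶠ[𝓝 z] (fun w => fderiv ℝ g w v) := by
    intro v
    filter_upwards [h.eventuallyEq_nhds] with w hw
    rw [hw.fderiv_eq]
  unfold lap
  rw [(h1 1).fderiv_eq, (h1 Complex.I).fderiv_eq]

lemma lap_comp_normSq {g : ℂ → ℂ} {W : Set ℂ} (hW : IsOpen W) (hg : DifferentiableOn ℂ g W)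
    {S : Set ℝ} {e e1 e2 : ℝ → ℝ} (h1 : ∀ x ∈ S, HasDerivAt e (e1 x) x)
    (h2 : ∀ x ∈ S, HasDerivAt e1 (e2 x) x) (hS : ∀ z ∈ W, ‖g z‖ ^ 2 ∈ S) {z : ℂ} (hz : z ∈ W) :
    lap (fun w => e (‖g w‖ ^ 2)) z =
      4 * ‖deriv g z‖ ^ 2 * (e1 (‖g z‖ ^ 2) + ‖g z‖ ^ 2 * e2 (‖g z‖ ^ 2)) := by
  have hgd : ∀ w ∈ W, HasDerivAt g (deriv g w) w := fun w hw =>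
    (hg.differentiableAt (hW.mem_nhds hw)).hasDerivAt
  have hg2 : DifferentiableOn ℂ (deriv g) W := hg.deriv hW
  have hgd2 : ∀ w ∈ W, HasDerivAt (deriv g) (deriv (deriv g) w) w := fun w hw =>
    (hg2.differentiableAt (hW.mem_nhds hw)).hasDerivAt
  have hN : ∀ w ∈ W, ∀ v : ℂ, HasDerivAt (fun t : ℝ => ‖g (w + t * v)‖ ^ 2)
      (2 * ((g w).re * (deriv g w * v).re + (g w).im * (deriv g w * v).im)) 0 := by
    intro w hw v
    have ha : HasDerivAt (fun t : ℝ => w + (t:ℂ) * v) v 0 := by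
      have := ((Complex.ofRealCLM.hasDerivAt (x := (0:ℝ))).mul_const v).const_add w
      simpa using this
    have hb : HasDerivAt (fun t : ℝ => g (w + (t:ℂ) * v)) (deriv g w * v) 0 := by
      have h0 : HasDerivAt g (deriv g w) (w + ((0:ℝ):ℂ) * v) := by simpa using hgd w hw
      exact h0.comp (0:ℝ) ha
    have hre := Complex.reCLM.hasFDerivAt.comp_hasDerivAt (0:ℝ) hb
    have him := Complex.imCLM.hasFDerivAt.comp_hasDerivAt (0:ℝ) hb
    have := (hre.pow 2).add (him.pow 2)
    refine (this.congr_deriv ?_).congr_of_eventuallyEq (Eventually.of_forall fun t => ?_)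
    · simp; ring
    · simp [← Complex.normSq_eq_norm_sq, Complex.normSq_apply]; ring
  have hNd : ∀ w ∈ W, DifferentiableAt ℝ (fun w => ‖g w‖ ^ 2) w := fun w hw =>
    ((hgd w hw).differentiableAt.restrictScalars ℝ).norm_sq ℝ
  have line : ∀ (k : ℂ → ℝ) (w v : ℂ) (d : ℝ), DifferentiableAt ℝ k w →
      HasDerivAt (fun t : ℝ => k (w + t * v)) d 0 → fderiv ℝ k w v = d := by
    intro k w v d hk hd
    have ha : HasDerivAt (fun t : ℝ => w + (t:ℂ) * v) v 0 := by
      have := ((Complex.ofRealCLM.hasDerivAt (x := (0:ℝ))).mul_const v).const_add w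
      simpa using this
    have h0 : HasFDerivAt k (fderiv ℝ k w) (w + ((0:ℝ):ℂ) * v) := by simpa using hk.hasFDerivAt
    exact (h0.comp_hasDerivAt (0:ℝ) ha).unique hd
  have hfirst : ∀ w ∈ W, ∀ v : ℂ, fderiv ℝ (fun w => e (‖g w‖ ^ 2)) w v =
      e1 (‖g w‖ ^ 2) * (2 * ((g w).re * (deriv g w * v).re + (g w).im * (deriv g w * v).im)) := by
    intro w hw v
    apply line _ _ _ _ (((h1 _ (hS w hw)).differentiableAt).comp w (hNd w hw))
    have h0 : HasDerivAt e (e1 (‖g w‖ ^ 2)) (‖g (w + ((0:ℝ):ℂ) * v)‖ ^ 2) := by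
      simpa using h1 _ (hS w hw)
    exact h0.comp (0:ℝ) (hN w hw v)
  have hsecond : ∀ v : ℂ, fderiv ℝ (fun w => fderiv ℝ (fun w => e (‖g w‖ ^ 2)) w v) z v =
      e2 (‖g z‖ ^ 2) * (2 * ((g z).re * (deriv g z * v).re + (g z).im * (deriv g z * v).im)) ^ 2 +
      e1 (‖g z‖ ^ 2) * (2 * ((deriv g z * v).re ^ 2 + (deriv g z * v).im ^ 2 +
        (g z).re * (deriv (deriv g) z * v * v).re + (g z).im * (deriv (deriv g) z * v * v).im)) := by
    intro v
    have hev : (fun w => fderiv ℝ (fun w => e (‖g w‖ ^ 2)) w v) =ᶠ[𝓝 z] fun w =>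
      e1 (‖g w‖ ^ 2) * (2 * ((g w).re * (deriv g w * v).re + (g w).im * (deriv g w * v).im)) := by
      filter_upwards [hW.mem_nhds hz] with w hw using hfirst w hw v
    rw [hev.fderiv_eq]
    have dg : DifferentiableAt ℝ g z := (hgd z hz).differentiableAt.restrictScalars ℝ
    have dg' : DifferentiableAt ℝ (deriv g) z := (hgd2 z hz).differentiableAt.restrictScalars ℝ
    have de : DifferentiableAt ℝ (fun w => e1 (‖g w‖ ^ 2)) z :=
      ((h2 _ (hS z hz)).differentiableAt).comp z (hNd z hz)
    have dre : ∀ k : ℂ → ℂ, DifferentiableAt ℝ k z → DifferentiableAt ℝ (fun w => (k w).re) z :=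
      fun k hk => Complex.reCLM.differentiableAt.comp z hk
    have dim : ∀ k : ℂ → ℂ, DifferentiableAt ℝ k z → DifferentiableAt ℝ (fun w => (k w).im) z :=
      fun k hk => Complex.imCLM.differentiableAt.comp z hk
    have dm : DifferentiableAt ℝ (fun w => deriv g w * v) z := dg'.mul_const v
    apply line
    · exact de.mul ((((dre _ dg).mul (dre _ dm)).add ((dim _ dg).mul (dim _ dm))).const_mul 2)
    · have ha : HasDerivAt (fun t : ℝ => z + (t:ℂ) * v) v 0 := by
        have := ((Complex.ofRealCLM.hasDerivAt (x := (0:ℝ))).mul_const v).const_add z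
        simpa using this
      have hb : HasDerivAt (fun t : ℝ => g (z + (t:ℂ) * v)) (deriv g z * v) 0 := by
        have h0 : HasDerivAt g (deriv g z) (z + ((0:ℝ):ℂ) * v) := by simpa using hgd z hz
        exact h0.comp (0:ℝ) ha
      have hc : HasDerivAt (fun t : ℝ => deriv g (z + (t:ℂ) * v) * v)
          (deriv (deriv g) z * v * v) 0 := by
        have h0 : HasDerivAt (deriv g) (deriv (deriv g) z) (z + ((0:ℝ):ℂ) * v) := by
          simpa using hgd2 z hz
        exact (h0.comp (0:ℝ) ha).mul_const v
      have hbre := Complex.reCLM.hasFDerivAt.comp_hasDerivAt (0:ℝ) hb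
      have hbim := Complex.imCLM.hasFDerivAt.comp_hasDerivAt (0:ℝ) hb
      have hcre := Complex.reCLM.hasFDerivAt.comp_hasDerivAt (0:ℝ) hc
      have hcim := Complex.imCLM.hasFDerivAt.comp_hasDerivAt (0:ℝ) hc
      have h0 : HasDerivAt e1 (e2 (‖g z‖ ^ 2)) (‖g (z + ((0:ℝ):ℂ) * v)‖ ^ 2) := by
        simpa using h2 _ (hS z hz)
      have he := h0.comp (0:ℝ) (hN z hz v)
      have := he.mul (((hbre.mul hcre).add (hbim.mul hcim)).const_mul 2)
      refine (this.congr_deriv ?_)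
      simp
      ring
  unfold lap
  rw [hsecond 1, hsecond Complex.I]
  rw [← Complex.normSq_eq_norm_sq, ← Complex.normSq_eq_norm_sq, Complex.normSq_apply, Complex.normSq_apply]
  simp
  ring

lemma lap_contDiff {φ : ℂ → ℝ} (h : ContDiff ℝ 2 φ) : Continuous (lap φ) := by
  have h1 : ∀ v : ℂ, ContDiff ℝ 1 (fun w => fderiv ℝ φ w v) := fun v =>
    (h.fderiv_right (m := 1) (by norm_num)).clm_apply contDiff_const
  have h2 : ∀ v : ℂ, Continuous (fun z => fderiv ℝ (fun w => fderiv ℝ φ w v) z v) := fun v =>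
    ((h1 v).continuous_fderiv (by norm_num)).clm_apply continuous_const
  exact (h2 1).add (h2 Complex.I)

lemma lap_tsupport (φ : ℂ → ℝ) : ∀ z, z ∉ tsupport φ → lap φ z = 0 := by
  intro z hz
  have : φ =ᶠ[𝓝 z] fun _ => (0:ℝ) := notMem_tsupport_iff_eventuallyEq.1 hz
  rw [lap_congr this]
  simp [lap]

lemma lap_hasCompactSupport {φ : ℂ → ℝ} (h : HasCompactSupport φ) : HasCompactSupport (lap φ) := by
  apply HasCompactSupport.intro h
  exact lap_tsupport φ

lemma lap_add {φ v : ℂ → ℝ} (h : ContDiff ℝ 2 φ) (hv : ContDiff ℝ 2 v) (z : ℂ) :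
    lap (fun w => φ w + v w) z = lap φ z + lap v z := by
  have d1 : ∀ {k : ℂ → ℝ}, ContDiff ℝ 2 k → ∀ w, DifferentiableAt ℝ k w := fun hk w =>
    (hk.differentiable (by norm_num)) w
  have d2 : ∀ {k : ℂ → ℝ}, ContDiff ℝ 2 k → ∀ (v w : ℂ), DifferentiableAt ℝ (fun w => fderiv ℝ k w v) w := 
    fun hk v w => ((hk.fderiv_right (m := 1) (by norm_num)).clm_apply contDiff_const).differentiable (by norm_num) w
  have e : ∀ c : ℂ, (fun w => fderiv ℝ (fun w => φ w + v w) w c) = fun w => fderiv ℝ φ w c + fderiv ℝ v w c := by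
    intro c; ext w; rw [fderiv_fun_add (d1 h w) (d1 hv w)]; rfl
  unfold lap
  rw [e, e, fderiv_fun_add (d2 h _ _) (d2 hv _ _), fderiv_fun_add (d2 h _ _) (d2 hv _ _)]
  simp; ring

lemma lap_ibp {φ v : ℂ → ℝ} (h : ContDiff ℝ 2 φ) (hc : HasCompactSupport φ) (hv : ContDiff ℝ 2 v) :
    ∫ z, v z * lap φ z = ∫ z, φ z * lap v z := by
  have key : ∀ c : ℂ, ∫ z, v z * fderiv ℝ (fun w => fderiv ℝ φ w c) z c =
      ∫ z, φ z * fderiv ℝ (fun w => fderiv ℝ v w c) z c := by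
    intro c
    have c1 : ContDiff ℝ 1 (fun w => fderiv ℝ φ w c) :=
      (h.fderiv_right (m := 1) (by norm_num)).clm_apply contDiff_const
    have c2 : ContDiff ℝ 1 (fun w => fderiv ℝ v w c) :=
      (hv.fderiv_right (m := 1) (by norm_num)).clm_apply contDiff_const
    have s1 : HasCompactSupport (fun w => fderiv ℝ φ w c) := hc.fderiv_apply ℝ c
    have s2 : HasCompactSupport (fun z => fderiv ℝ (fun w => fderiv ℝ φ w c) z c) := s1.fderiv_apply ℝ c
    have k1 := c1.continuous
    have k2 := c2.continuous
    have k3 : Continuous (fun z => fderiv ℝ (fun w => fderiv ℝ φ w c) z c) :=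
      (c1.continuous_fderiv (by norm_num)).clm_apply continuous_const
    have k4 : Continuous (fun z => fderiv ℝ (fun w => fderiv ℝ v w c) z c) :=
      (c2.continuous_fderiv (by norm_num)).clm_apply continuous_const
    have kv := hv.continuous
    have kφ := h.continuous
    rw [integral_mul_fderiv_eq_neg_fderiv_mul_of_integrable
      ((k2.mul k1).integrable_of_hasCompactSupport s1.mul_left)
      ((kv.mul k3).integrable_of_hasCompactSupport s2.mul_left)
      ((kv.mul k1).integrable_of_hasCompactSupport s1.mul_left)
      (fun x _ => hv.differentiable (by norm_num) x) (fun x _ => c1.differentiable (by norm_num) x)]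
    rw [integral_mul_fderiv_eq_neg_fderiv_mul_of_integrable
      ((k1.mul k2).integrable_of_hasCompactSupport s1.mul_right)
      ((kφ.mul k4).integrable_of_hasCompactSupport hc.mul_right)
      ((kφ.mul k2).integrable_of_hasCompactSupport hc.mul_right)
      (fun x _ => h.differentiable (by norm_num) x) (fun x _ => c2.differentiable (by norm_num) x)]
    simp only [mul_comm]
  have int1 : ∀ c : ℂ, Integrable (fun z => v z * fderiv ℝ (fun w => fderiv ℝ φ w c) z c) := by
    intro c
    have c1 : ContDiff ℝ 1 (fun w => fderiv ℝ φ w c) :=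
      (h.fderiv_right (m := 1) (by norm_num)).clm_apply contDiff_const
    exact (hv.continuous.mul ((c1.continuous_fderiv (by norm_num)).clm_apply
      continuous_const)).integrable_of_hasCompactSupport ((hc.fderiv_apply ℝ c).fderiv_apply ℝ c).mul_left
  have int2 : ∀ c : ℂ, Integrable (fun z => φ z * fderiv ℝ (fun w => fderiv ℝ v w c) z c) := by
    intro c
    have c1 : ContDiff ℝ 1 (fun w => fderiv ℝ v w c) :=
      (hv.fderiv_right (m := 1) (by norm_num)).clm_apply contDiff_const
    exact (h.continuous.mul ((c1.continuous_fderiv (by norm_num)).clm_apply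
      continuous_const)).integrable_of_hasCompactSupport hc.mul_right
  unfold lap
  simp only [mul_add]
  rw [integral_add (int1 1) (int1 I), integral_add (int2 1) (int2 I), key, key]

lemma exists_cutoff {K Ω : Set ℂ} (hK : IsCompact K) (hΩ : IsOpen Ω) (hKΩ : K ⊆ Ω) :
    ∃ χ : ℂ → ℝ, ContDiff ℝ 2 χ ∧ HasCompactSupport χ ∧ tsupport χ ⊆ Ω ∧
      (∀ z, 0 ≤ χ z ∧ χ z ≤ 1) ∧ (∀ z ∈ K, χ =ᶠ[𝓝 z] fun _ => 1) := by
  obtain ⟨L, hL, hKL, hLΩ⟩ := exists_compact_between hK hΩ hKΩ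
  obtain ⟨f, h1, h0, hf⟩ := exists_contMDiffMap_one_nhds_of_subset_interior (n := 2)
    (modelWithCornersSelf ℝ ℂ) hK.isClosed hKL
  have hts : tsupport (f : ℂ → ℝ) ⊆ L := by
    apply closure_minimal _ hL.isClosed
    intro x hx
    by_contra h
    exact hx (h0 x h)
  refine ⟨f, f.contMDiff.contDiff, hL.of_isClosed_subset (isClosed_tsupport _) hts,
    hts.trans hLΩ, fun z => hf z, fun z hz => ?_⟩
  exact (eventually_nhdsSet_iff_forall.1 h1) z hz

lemma cutoff_mul {Ω : Set ℂ} (hΩ : IsOpen Ω) {χ v : ℂ → ℝ} (h : ContDiff ℝ 2 χ)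
    (hc : HasCompactSupport χ) (hs : tsupport χ ⊆ Ω) (hv : ContDiffOn ℝ 2 v Ω) :
    ContDiff ℝ 2 (fun z => χ z * v z) ∧ HasCompactSupport (fun z => χ z * v z) ∧
      tsupport (fun z => χ z * v z) ⊆ Ω := by
  have hsub : tsupport (fun z => χ z * v z) ⊆ tsupport χ := tsupport_mul_subset_left
  refine ⟨?_, hc.mul_right, hsub.trans hs⟩
  rw [contDiff_iff_contDiffAt]
  intro z
  by_cases hz : z ∈ tsupport χ
  · exact h.contDiffAt.mul (hv.contDiffAt (hΩ.mem_nhds (hs hz)))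
  · have : (fun z => χ z * v z) =ᶠ[𝓝 z] fun _ => 0 := by
      filter_upwards [notMem_tsupport_iff_eventuallyEq.1 hz] with w hw
      simp [hw]
    exact contDiffAt_const.congr_of_eventuallyEq this



structure CMap (Ω : Set ℂ) (ψ φ : ℂ → ℂ) : Prop where
  ψd : ∀ z ∈ closedBall (0:ℂ) 1, DifferentiableAt ℂ ψ z
  ψm : ∀ z ∈ ball (0:ℂ) 1, ψ z ∈ Ω
  φd : DifferentiableOn ℂ φ Ω
  φm : ∀ w ∈ Ω, φ w ∈ ball (0:ℂ) 1
  φψ : ∀ z ∈ ball (0:ℂ) 1, φ (ψ z) = z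
  ψφ : ∀ w ∈ Ω, ψ (φ w) = w
  φc : ContinuousOn φ (closure Ω)
  φcm : ∀ w ∈ closure Ω, φ w ∈ closedBall (0:ℂ) 1
  dd : ∀ z ∈ ball (0:ℂ) 1, deriv φ (ψ z) * deriv ψ z = 1

lemma exists_cmap {Ω : Set ℂ} (hΩ : AnalyticJordanDomain Ω) : ∃ ψ φ : ℂ → ℂ, CMap Ω ψ φ := by
  obtain ⟨U, ψ, hU, hUb, hd, hi, him, hfr⟩ := hΩ.analyticBoundary
  set φ : ℂ → ℂ := Function.invFunOn ψ U with hφ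
  have left : ∀ z ∈ U, φ (ψ z) = z := fun z hz => hi.leftInvOn_invFunOn hz
  have han : ∀ z ∈ U, AnalyticAt ℂ ψ z := fun z hz => hd.analyticAt (hU.mem_nhds hz)
  -- nonconstant
  have hnc : ∀ z ∈ U, ¬ ∀ᶠ w in 𝓝 z, ψ w = ψ z := by
    intro z hz h
    have h2 : ∀ᶠ w in 𝓝 z, w = z := by
      filter_upwards [h, hU.mem_nhds hz] with w hw hwU using hi hwU hz hw
    have h3 : ∀ᶠ w in 𝓝[≠] z, False := by
      filter_upwards [h2.filter_mono nhdsWithin_le_nhds, self_mem_nhdsWithin] with w a b using b a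
    exact (h3.exists).elim fun _ h => h
  have hopen : ∀ z ∈ U, 𝓝 (ψ z) ≤ map ψ (𝓝 z) := fun z hz =>
    ((han z hz).eventually_constant_or_nhds_le_map_nhds).resolve_left (hnc z hz)
  have hVnhds : ∀ z ∈ U, ψ '' U ∈ 𝓝 (ψ z) := fun z hz =>
    hopen z hz (image_mem_map (hU.mem_nhds hz))
  have hcont : ∀ z ∈ U, ContinuousAt φ (ψ z) := by
    intro z hz
    unfold ContinuousAt
    rw [left z hz]
    refine Tendsto.mono_left ?_ (hopen z hz)
    rw [tendsto_map'_iff]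
    refine tendsto_id.congr' ?_
    filter_upwards [hU.mem_nhds hz] with w hw
    simp [left w hw]
  have hright : ∀ w ∈ ψ '' U, ψ (φ w) = w := by
    rintro w ⟨z, hz, rfl⟩
    rw [left z hz]
  have hdiff0 : ∀ z ∈ U, deriv ψ z ≠ 0 → DifferentiableAt ℂ φ (ψ z) := by
    intro z hz hne
    have hz' : HasDerivAt ψ (deriv ψ z) (φ (ψ z)) := by
      rw [left z hz]; exact (han z hz).differentiableAt.hasDerivAt
    exact (hz'.of_local_left_inverse (hcont z hz) hne
      (by filter_upwards [hVnhds z hz] with w hw using hright w hw)).differentiableAt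
  have hdiff : ∀ z ∈ U, DifferentiableAt ℂ φ (ψ z) := by
    intro z hz
    have hevn : ∀ᶠ w in 𝓝[≠] z, deriv ψ w ≠ 0 := by
      rcases (han z hz).deriv.eventually_eq_zero_or_eventually_ne_zero with h | h
      · exfalso
        apply hnc z hz
        obtain ⟨ε, hε, hb⟩ := Metric.eventually_nhds_iff_ball.1 (h.and (hU.mem_nhds hz))
        filter_upwards [ball_mem_nhds z hε] with w hw
        refine (convex_ball z ε).is_const_of_fderivWithin_eq_zero (𝕜 := ℂ) (f := ψ)
          (fun x hx => (han x (hb x hx).2).differentiableAt.differentiableWithinAt) ?_ hw (mem_ball_self hε)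
        intro x hx
        rw [fderivWithin_of_isOpen isOpen_ball hx]
        ext
        simpa using (hb x hx).1
      · exact h
    -- punctured nbhd
    have hpn : ∀ᶠ w in 𝓝 z, w ≠ z → deriv ψ w ≠ 0 := eventually_nhdsWithin_iff.1 hevn
    have hT : {y | ∃ w ∈ U, ψ w = y ∧ (w ≠ z → deriv ψ w ≠ 0)} ∈ 𝓝 (ψ z) := by
      apply hopen z hz
      rw [mem_map]
      filter_upwards [hpn, hU.mem_nhds hz] with w h1 h2
      exact ⟨w, h2, rfl, h1⟩
    have := (differentiableOn_compl_singleton_and_continuousAt_iff (f := φ) hT).1 ⟨?_, hcont z hz⟩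
    · exact this.differentiableAt hT
    · rintro y ⟨⟨w, hw, rfl, h1⟩, h2⟩
      apply (hdiff0 w hw (h1 _)).differentiableWithinAt
      rintro rfl
      exact h2 rfl
  have hbU : ∀ z ∈ ball (0:ℂ) 1, z ∈ U := fun z hz => hUb (ball_subset_closedBall hz)
  have hcl : closure Ω = ψ '' closedBall (0:ℂ) 1 := by
    rw [closure_eq_self_union_frontier, ← hfr]
    nth_rw 1 [← him]
    rw [← image_union, ball_union_sphere]
  refine ⟨ψ, φ, ⟨fun z hz => (han z (hUb hz)).differentiableAt, fun z hz => ?_, ?_, ?_, ?_, ?_, ?_, ?_, ?_⟩⟩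
  · rw [← him]; exact mem_image_of_mem _ hz
  · rw [← him]
    rintro w ⟨z, hz, rfl⟩
    exact (hdiff z (hbU z hz)).differentiableWithinAt
  · rw [← him]
    rintro w ⟨z, hz, rfl⟩
    rw [left z (hbU z hz)]; exact hz
  · intro z hz; exact left z (hbU z hz)
  · rw [← him]
    rintro w ⟨z, hz, rfl⟩
    rw [left z (hbU z hz)]
  · rw [hcl]
    rintro w ⟨z, hz, rfl⟩
    exact (hcont z (hUb hz)).continuousWithinAt
  · rw [hcl]
    rintro w ⟨z, hz, rfl⟩
    rw [left z (hUb hz)]; exact hz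
  · intro z hz
    have h1 := ((hdiff z (hbU z hz)).hasDerivAt.comp z (han z (hbU z hz)).differentiableAt.hasDerivAt)
    have h2 : HasDerivAt (φ ∘ ψ) 1 z := by
      refine (hasDerivAt_id z).congr_of_eventuallyEq ?_
      filter_upwards [hU.mem_nhds (hbU z hz)] with w hw
      simp [left w hw]
    exact h1.unique h2



lemma sT_deriv_nonneg (x : ℝ) : 0 ≤ deriv Real.smoothTransition x :=
  Real.smoothTransition.monotone.deriv_nonneg

lemma sT_deriv_left {x : ℝ} (hx : x ≤ 0) : deriv Real.smoothTransition x = 0 := by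
  apply IsLocalMin.deriv_eq_zero
  apply Eventually.of_forall
  intro y
  rw [Real.smoothTransition.zero_of_nonpos hx]
  exact Real.smoothTransition.nonneg y

lemma sT_deriv_right {x : ℝ} (hx : 1 ≤ x) : deriv Real.smoothTransition x = 0 := by
  apply IsLocalMax.deriv_eq_zero
  apply Eventually.of_forall
  intro y
  rw [Real.smoothTransition.one_of_one_le hx]
  exact Real.smoothTransition.le_one y

lemma exists_radial : ∃ C0 : ℝ, 0 < C0 ∧ ∀ a b : ℝ, 1/4 ≤ a → a < b → b < 1 →
    ∃ e e1 e2 : ℝ → ℝ, (∀ x, HasDerivAt e (e1 x) x) ∧ (∀ x, HasDerivAt e1 (e2 x) x) ∧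
      ContDiff ℝ 2 e ∧ (∀ x, 0 ≤ x → 0 ≤ e x) ∧ (∀ x, b ≤ x → e x = 0) ∧
      (∀ x, 0 ≤ x → x ≤ 1 → e x ≤ 8 * (1 - x)) ∧
      Continuous (fun x => e1 x + x * e2 x) ∧
      (∀ x, 0 ≤ x → x ≤ 1/4 → e1 x + x * e2 x ≤ 0 ∧ -C0 ≤ e1 x + x * e2 x) ∧
      (∀ x, 1/4 ≤ x → 0 ≤ e1 x + x * e2 x) ∧
      (∀ x, 1/4 ≤ x → x ≤ a → e1 x + x * e2 x = 0) ∧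
      (∀ x, b ≤ x → e1 x + x * e2 x = 0) ∧
      (∫ x in a..b, (e1 x + x * e2 x) = 1) ∧
      (∃ x, 0 < x ∧ x < 1/4 ∧ e1 x + x * e2 x < 0) := by
  set S := Real.smoothTransition with hS
  have hSc : ContDiff ℝ 3 S := Real.smoothTransition.contDiff
  have hSd : ∀ x, HasDerivAt S (deriv S x) x := fun x =>
    (hSc.differentiable (by norm_num) x).hasDerivAt
  have hSdc : Continuous (deriv S) := hSc.continuous_deriv (by norm_num)
  obtain ⟨C1, hC1⟩ := (isCompact_Icc (a := (-1:ℝ)) (b := 1)).exists_bound_of_continuousOn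
    hSdc.continuousOn
  refine ⟨8 * |C1| + 1, by positivity, fun a b ha hab hb => ?_⟩
  have hba : 0 < b - a := sub_pos.2 hab
  set τ : ℝ → ℝ := fun x => S (8 * x - 1) * (1 - S ((x - a) / (b - a))) with hτ
  have hτc : ContDiff ℝ 3 τ := by
    apply ContDiff.mul (hSc.comp (by fun_prop))
    exact contDiff_const.sub (hSc.comp (by fun_prop))
  have hτ0 : ∀ x, x ≤ 1/8 → τ x = 0 := fun x hx => by
    simp only [hτ]; rw [hS, Real.smoothTransition.zero_of_nonpos (by linarith)]; simp
  have hτb : ∀ x, b ≤ x → τ x = 0 := fun x hx => by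
    simp only [hτ]
    rw [hS, Real.smoothTransition.one_of_one_le (x := (x - a) / (b - a)) (by rw [le_div_iff₀ hba]; linarith)]; simp
  have hτn : ∀ x, 0 ≤ τ x := fun x =>
    mul_nonneg (Real.smoothTransition.nonneg _) (sub_nonneg.2 (Real.smoothTransition.le_one _))
  have hτ1 : ∀ x, τ x ≤ 1 := fun x =>
    mul_le_one₀ (Real.smoothTransition.le_one _) (sub_nonneg.2 (Real.smoothTransition.le_one _))
      (by linarith [Real.smoothTransition.nonneg ((x - a) / (b - a))])
  have hτd : ∀ x, HasDerivAt τ (8 * deriv S (8 * x - 1) * (1 - S ((x - a) / (b - a)))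
      - S (8 * x - 1) * (deriv S ((x - a) / (b - a)) / (b - a))) x := by
    intro x
    have i1 : HasDerivAt (fun x : ℝ => 8 * x - 1) 8 x := by
      simpa using ((hasDerivAt_id x).const_mul 8).sub_const 1
    have i2 : HasDerivAt (fun x : ℝ => (x - a) / (b - a)) (1 / (b - a)) x :=
      ((hasDerivAt_id x).sub_const a).div_const (b - a)
    have j1 := (hSd (8 * x - 1)).comp x i1
    have j2 := ((hSd ((x - a) / (b - a))).comp x i2).const_sub 1
    refine (j1.mul j2).congr_deriv ?_
    simp only [Function.comp]
    ring
  set e1 : ℝ → ℝ := fun x => - (τ x / x) with he1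
  have he1c : ContDiff ℝ 3 e1 := by
    rw [contDiff_iff_contDiffAt]
    intro x
    rcases lt_or_ge x (1/8) with hx | hx
    · have : e1 =ᶠ[𝓝 x] fun _ => 0 := by
        filter_upwards [Iio_mem_nhds hx] with y hy
        simp [he1, hτ0 y (le_of_lt hy)]
      exact contDiffAt_const.congr_of_eventuallyEq this
    · exact (hτc.contDiffAt.div contDiffAt_id (by simp; linarith)).neg
  have he1d : ∀ x, HasDerivAt e1 (deriv e1 x) x := fun x =>
    (he1c.differentiable (by norm_num) x).hasDerivAt
  set e : ℝ → ℝ := fun x => ∫ t in (1:ℝ)..x, e1 t with he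
  have hed : ∀ x, HasDerivAt e (e1 x) x := fun x =>
    intervalIntegral.integral_hasDerivAt_right (he1c.continuous.intervalIntegrable _ _)
      he1c.continuous.stronglyMeasurable.stronglyMeasurableAtFilter he1c.continuous.continuousAt
  have hk : ∀ x, e1 x + x * deriv e1 x = -(8 * deriv S (8 * x - 1) * (1 - S ((x - a) / (b - a)))
      - S (8 * x - 1) * (deriv S ((x - a) / (b - a)) / (b - a))) := by
    intro x
    have h1 := (hasDerivAt_id x).mul (he1d x)
    have h2 := (hτd x).neg
    have h3 : (-τ) = (id * e1) := by
      ext y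
      by_cases hy : y = 0
      · simp [hy, hτ0 0 (by norm_num)]
      · simp [he1]; field_simp
    have h2' : HasDerivAt (id * e1) _ x := h3 ▸ h2
    have := h1.unique h2'
    simpa using this
  have hkc : Continuous (fun x => e1 x + x * deriv e1 x) :=
    he1c.continuous.add (continuous_id.mul (he1c.continuous_deriv (by norm_num)))
  have hkint : ∀ x y, ∫ t in x..y, (e1 t + t * deriv e1 t) = τ x - τ y := by
    intro x y
    have h1 : ∀ t, HasDerivAt (fun t => - τ t) (e1 t + t * deriv e1 t) t := by
      intro t; rw [hk]; exact (hτd t).neg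
    rw [intervalIntegral.integral_eq_sub_of_hasDerivAt (fun t _ => h1 t) (hkc.intervalIntegrable _ _)]
    ring
  have tau1 : ∀ x, 1/4 ≤ x → x ≤ a → τ x = 1 := by
    intro x h1 h2
    simp only [hτ, hS]
    rw [Real.smoothTransition.one_of_one_le (by linarith),
      Real.smoothTransition.zero_of_nonpos (div_nonpos_of_nonpos_of_nonneg (by linarith) hba.le)]
    simp
  refine ⟨e, e1, deriv e1, hed, he1d, ?_, ?_, ?_, ?_, hkc, ?_, ?_, ?_, ?_, ?_, ?_⟩
  · have h1 : deriv e = e1 := funext fun x => (hed x).deriv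
    have : ContDiff ℝ (1 + 1) e := by
      rw [contDiff_succ_iff_deriv]
      exact ⟨fun x => (hed x).differentiableAt, by simp, by
        rw [h1]; exact he1c.of_le (by norm_num)⟩
    simpa [one_add_one_eq_two] using this
  · intro x hx
    rcases le_total x 1 with h | h
    · simp only [he]
      rw [intervalIntegral.integral_symm, ← intervalIntegral.integral_neg]
      apply intervalIntegral.integral_nonneg h
      intro t ht
      simp only [he1, neg_neg]
      exact div_nonneg (hτn t) (hx.trans ht.1)
    · simp only [he]
      rw [intervalIntegral.integral_congr (g := fun _ => 0)]
      · simp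
      · intro t ht
        rw [uIcc_of_le h] at ht
        simp [he1, hτb t (by linarith [ht.1])]
  · intro x hx
    simp only [he]
    rw [intervalIntegral.integral_congr (g := fun _ => 0)]
    · simp
    · intro t ht
      have : b ≤ t := by
        rcases le_total 1 x with h | h
        · rw [uIcc_of_le h] at ht; linarith [ht.1]
        · rw [uIcc_of_ge h] at ht; linarith [ht.1]
      simp [he1, hτb t this]
  · intro x hx hx1
    simp only [he]
    rw [intervalIntegral.integral_symm, ← intervalIntegral.integral_neg]
    have : ∫ t in x..1, - e1 t ≤ ∫ t in x..1, (8:ℝ) := by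
      apply intervalIntegral.integral_mono_on hx1
      · exact he1c.continuous.neg.intervalIntegrable _ _
      · exact continuous_const.intervalIntegrable _ _
      · intro t ht
        simp only [he1, neg_neg]
        rcases le_total t (1/8) with h | h
        · simp [hτ0 t h]
        · rw [div_le_iff₀ (by linarith)]
          linarith [hτ1 t]
    refine this.trans ?_
    simp; linarith
  · intro x hx hx4
    rw [hk, hS, sT_deriv_left (x := (x - a) / (b - a)) (div_nonpos_of_nonpos_of_nonneg (by linarith) hba.le),
      Real.smoothTransition.zero_of_nonpos (x := (x - a) / (b - a)) (div_nonpos_of_nonpos_of_nonneg (by linarith) hba.le)]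
    have h1 := sT_deriv_nonneg (8 * x - 1)
    have h2 := hC1 (8 * x - 1) ⟨by linarith, by linarith⟩
    rw [Real.norm_eq_abs] at h2
    have h3 := (le_abs_self _).trans (h2.trans (le_abs_self _))
    constructor
    · simp; exact h1
    · simp; linarith
  · intro x hx
    rw [hk, hS, sT_deriv_right (x := 8 * x - 1) (by linarith)]
    have := mul_nonneg (Real.smoothTransition.nonneg (8 * x - 1)) (div_nonneg (sT_deriv_nonneg ((x - a) / (b - a))) hba.le)
    linarith
  · intro x hx hxa
    rw [hk, hS, sT_deriv_right (x := 8 * x - 1) (by linarith), 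
      sT_deriv_left (x := (x - a) / (b - a)) (div_nonpos_of_nonpos_of_nonneg (by linarith) hba.le)]
    simp
  · intro x hx
    rw [hk, hS, sT_deriv_right (x := 8 * x - 1) (by linarith), 
      sT_deriv_right (x := (x - a) / (b - a)) (by rw [le_div_iff₀ hba]; linarith)]
    simp
  · rw [hkint, tau1 a ha le_rfl, hτb b le_rfl]; simp
  · by_contra! hcon
    have h1 : 0 ≤ ∫ t in (0:ℝ)..(1/4), (e1 t + t * deriv e1 t) := by
      apply intervalIntegral.integral_nonneg_of_ae_restrict (by norm_num)
      rw [← restrict_Ioo_eq_restrict_Icc]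
      filter_upwards [ae_restrict_mem measurableSet_Ioo] with t ht using hcon t ht.1 ht.2
    rw [hkint, tau1 (1/4) le_rfl ha, hτ0 0 (by norm_num)] at h1
    norm_num at h1



lemma radial_test {Ω : Set ℂ} {ψ φ : ℂ → ℂ} (hO : IsOpen Ω) (cm : CMap Ω ψ φ) {e e1 e2 : ℝ → ℝ}
    (h1 : ∀ x, HasDerivAt e (e1 x) x) (h2 : ∀ x, HasDerivAt e1 (e2 x) x) (hc : ContDiff ℝ 2 e)
    {b : ℝ} (hb : b < 1) (he : ∀ x, b ≤ x → e x = 0) :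
    ContDiff ℝ 2 (Ω.indicator (fun w => e (‖φ w‖ ^ 2))) ∧
    HasCompactSupport (Ω.indicator (fun w => e (‖φ w‖ ^ 2))) ∧
    tsupport (Ω.indicator (fun w => e (‖φ w‖ ^ 2))) ⊆ Ω ∧
    ∀ z ∈ Ω, lap (Ω.indicator (fun w => e (‖φ w‖ ^ 2))) z =
      4 * ‖deriv φ z‖ ^ 2 * (e1 (‖φ z‖ ^ 2) + ‖φ z‖ ^ 2 * e2 (‖φ z‖ ^ 2)) := by
  set E := Ω.indicator (fun w => e (‖φ w‖ ^ 2)) with hE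
  have hsq : Real.sqrt b < 1 := by
    rw [Real.sqrt_lt' one_pos]; simpa using hb
  have hsub : closedBall (0:ℂ) (Real.sqrt b) ⊆ ball 0 1 := closedBall_subset_ball hsq
  have hK : IsCompact (ψ '' closedBall (0:ℂ) (Real.sqrt b)) := by
    apply (isCompact_closedBall _ _).image_of_continuousOn
    intro z hz
    exact (cm.ψd z (ball_subset_closedBall (hsub hz))).continuousAt.continuousWithinAt
  have hKΩ : ψ '' closedBall (0:ℂ) (Real.sqrt b) ⊆ Ω := by
    rintro _ ⟨z, hz, rfl⟩
    exact cm.ψm z (hsub hz)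
  have hts : tsupport E ⊆ ψ '' closedBall (0:ℂ) (Real.sqrt b) := by
    apply closure_minimal _ hK.isClosed
    intro z hz
    have hzΩ : z ∈ Ω := by
      by_contra h
      exact hz (indicator_of_notMem h _)
    refine ⟨φ z, ?_, cm.ψφ z hzΩ⟩
    rw [mem_closedBall_zero_iff]
    by_contra h
    push Not at h
    apply hz
    rw [hE, indicator_of_mem hzΩ]
    apply he
    exact (Real.lt_sq_of_sqrt_lt h).le
  have hev : ∀ z ∈ Ω, E =ᶠ[𝓝 z] fun w => e (‖φ w‖ ^ 2) := by
    intro z hz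
    filter_upwards [hO.mem_nhds hz] with w hw
    exact indicator_of_mem hw _
  refine ⟨?_, hK.of_isClosed_subset (isClosed_tsupport _) hts, hts.trans hKΩ, ?_⟩
  · rw [contDiff_iff_contDiffAt]
    intro z
    by_cases hz : z ∈ tsupport E
    · have hzΩ := hKΩ (hts hz)
      refine ContDiffAt.congr_of_eventuallyEq ?_ (hev z hzΩ)
      have : ContDiffAt ℝ 2 φ z :=
        ((cm.φd.contDiffOn hO).contDiffAt (hO.mem_nhds hzΩ)).restrict_scalars ℝ
      exact hc.contDiffAt.comp z (this.norm_sq ℝ)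
    · exact contDiffAt_const.congr_of_eventuallyEq (notMem_tsupport_iff_eventuallyEq.1 hz)
  · intro z hz
    rw [lap_congr (hev z hz)]
    exact lap_comp_normSq hO cm.φd (S := univ) (fun x _ => h1 x) (fun x _ => h2 x) (fun _ _ => mem_univ _) hz

lemma compact_eq_aux {O : Set ℂ} (hO : IsOpen O) {ν1 ν2 : Measure ℂ}
    (f1 : ∀ K, IsCompact K → K ⊆ O → ν1 K < ⊤) (f2 : ∀ K, IsCompact K → K ⊆ O → ν2 K < ⊤)
    (h : ∀ χ : ℂ → ℝ, ContDiff ℝ 2 χ → HasCompactSupport χ → tsupport χ ⊆ O →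
      ∫ z, χ z ∂ν1 = ∫ z, χ z ∂ν2) {K : Set ℂ} (hK : IsCompact K) (hKO : K ⊆ O) : ν1 K ≤ ν2 K := by
  obtain ⟨L, hL, hKL, hLO⟩ := exists_compact_between hK hO hKO
  apply le_of_forall_gt
  intro r hr
  have : IsFiniteMeasure (ν2.restrict L) := ⟨by simpa using f2 L hL hLO⟩
  obtain ⟨V0, hKV, hV0, hlt⟩ := Set.exists_isOpen_lt_of_lt (μ := ν2.restrict L) K r
    ((Measure.restrict_apply_le _ _).trans_lt hr)
  obtain ⟨χ, c1, c2, c3, c4, c5⟩ := exists_cutoff hK (hV0.inter isOpen_interior)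
    (subset_inter hKV hKL)
  have c3' : tsupport χ ⊆ L := c3.trans (inter_subset_right.trans interior_subset)
  have hint : ∀ ν : Measure ℂ, ν L < ⊤ → Integrable χ ν := by
    intro ν hν
    rw [← integrableOn_iff_integrable_of_support_subset ((subset_tsupport _).trans c3')]
    exact Measure.integrableOn_of_bounded (M := 1) hν.ne c1.continuous.aestronglyMeasurable
      (ae_of_all _ fun z => by rw [Real.norm_eq_abs, abs_le]; constructor <;> linarith [c4 z])
  have i1 := hint ν1 (f1 L hL hLO)
  have i2 := hint ν2 (f2 L hL hLO)
  have e := h χ c1 c2 (c3'.trans hLO)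
  have k1 : ν1 K ≤ ENNReal.ofReal (∫ z, χ z ∂ν1) := by
    rw [ofReal_integral_eq_lintegral_ofReal i1 (ae_of_all _ fun z => (c4 z).1)]
    calc ν1 K = ∫⁻ z, K.indicator 1 z ∂ν1 := by rw [lintegral_indicator_one hK.measurableSet]
      _ ≤ _ := by
        apply lintegral_mono
        intro z
        by_cases hz : z ∈ K
        · simp [hz, (c5 z hz).self_of_nhds]
        · simp [hz]
  have k2 : ENNReal.ofReal (∫ z, χ z ∂ν2) ≤ ν2 (V0 ∩ L) := by
    rw [ofReal_integral_eq_lintegral_ofReal i2 (ae_of_all _ fun z => (c4 z).1)]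
    calc _ ≤ ∫⁻ z, (V0 ∩ L).indicator 1 z ∂ν2 := by
          apply lintegral_mono
          intro z
          by_cases hz : z ∈ tsupport χ
          · have : z ∈ V0 ∩ L := ⟨(c3 hz).1, c3' hz⟩
            simp [this, (c4 z).2]
          · simp [image_eq_zero_of_notMem_tsupport hz]
      _ = _ := lintegral_indicator_one (hV0.measurableSet.inter hL.measurableSet)
  rw [Measure.restrict_apply hV0.measurableSet] at hlt
  exact (k1.trans (e ▸ k2)).trans_lt hlt

lemma exists_exhaust {O : Set ℂ} (hO : IsOpen O) : ∃ L : ℕ → Set ℂ, (∀ n, IsCompact (L n)) ∧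
    (∀ n, L n ⊆ O) ∧ ⋃ n, L n = O := by
  obtain ⟨F, hF, hFO, hU, _⟩ := hO.exists_iUnion_isClosed
  refine ⟨fun n => (F n.unpair.1) ∩ closedBall 0 n.unpair.2, fun n => (isCompact_closedBall _ _).inter_left (hF _),
    fun n => inter_subset_left.trans (hFO _), ?_⟩
  ext z
  simp only [mem_iUnion, mem_inter_iff, ← hU]
  constructor
  · rintro ⟨n, h, _⟩; exact ⟨_, h⟩
  · rintro ⟨n, h⟩
    obtain ⟨m, hm⟩ := exists_nat_ge ‖z‖
    exact ⟨Nat.pair n m, by simpa using h, by simpa using hm⟩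

lemma restrict_eq_of_test {O : Set ℂ} (hO : IsOpen O) {ν1 ν2 : Measure ℂ}
    (f1 : ∀ K, IsCompact K → K ⊆ O → ν1 K < ⊤) (f2 : ∀ K, IsCompact K → K ⊆ O → ν2 K < ⊤)
    (h : ∀ χ : ℂ → ℝ, ContDiff ℝ 2 χ → HasCompactSupport χ → tsupport χ ⊆ O →
      ∫ z, χ z ∂ν1 = ∫ z, χ z ∂ν2) : ν1.restrict O = ν2.restrict O := by
  obtain ⟨L, hL, hLO, hU⟩ := exists_exhaust hO
  have key : ∀ K, IsCompact K → K ⊆ O → ν1 K = ν2 K := fun K hK hKO =>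
    le_antisymm (compact_eq_aux hO f1 f2 h hK hKO)
      (compact_eq_aux hO f2 f1 (fun χ a b c => (h χ a b c).symm) hK hKO)
  rw [← hU, Measure.restrict_iUnion_congr]
  intro n
  have : IsFiniteMeasure (ν1.restrict (L n)) := ⟨by simpa using f1 _ (hL n) (hLO n)⟩
  apply ext_of_generate_finite {s : Set ℂ | IsClosed s}
  · rw [BorelSpace.measurable_eq (α := ℂ), borel_eq_generateFrom_isClosed]
  · exact isPiSystem_isClosed
  · intro s hs
    rw [Measure.restrict_apply hs.measurableSet, Measure.restrict_apply hs.measurableSet]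
    exact key _ ((hL n).inter_left hs) (inter_subset_right.trans (hLO n))
  · simpa using key _ (hL n) (hLO n)

lemma le_sub_add_meas {μ ν : Measure ℂ} [IsFiniteMeasure μ] [IsFiniteMeasure ν] :
    μ ≤ μ - ν + ν := by
  obtain ⟨s, hs, h1, h2⟩ := hahn_decomposition μ ν
  have a : ν.restrict s ≤ μ.restrict s := by
    rw [Measure.le_iff]; intro t ht
    rw [Measure.restrict_apply ht, Measure.restrict_apply ht]
    exact h1 _ (ht.inter hs) inter_subset_right
  have b : μ.restrict sᶜ ≤ ν.restrict sᶜ := by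
    rw [Measure.le_iff]; intro t ht
    rw [Measure.restrict_apply ht, Measure.restrict_apply ht]
    exact h2 _ (ht.inter hs.compl) inter_subset_right
  rw [← Measure.restrict_add_restrict_compl (μ := μ - ν + ν) hs]
  conv_lhs => rw [← Measure.restrict_add_restrict_compl (μ := μ) hs]
  apply add_le_add
  · rw [Measure.restrict_add, Measure.restrict_sub_eq_restrict_sub_restrict hs, Measure.sub_add_cancel_of_le a]
  · rw [Measure.restrict_add]
    exact b.trans (Measure.le_add_left le_rfl)



lemma cont_mul_aux {Ω : Set ℂ} (hO : IsOpen Ω) {w g : ℂ → ℝ} (hw : ContinuousOn w Ω)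
    (hg : Continuous g) (hc : HasCompactSupport g) (hs : tsupport g ⊆ Ω) :
    Continuous (fun z => w z * g z) ∧ HasCompactSupport (fun z => w z * g z) ∧
    (∫ z in Ω, w z * g z = ∫ z, w z * g z) := by
  refine ⟨?_, hc.mul_left, ?_⟩
  · rw [continuous_iff_continuousAt]
    intro z
    by_cases hz : z ∈ tsupport g
    · exact (hw.continuousAt (hO.mem_nhds (hs hz))).mul hg.continuousAt
    · have : (fun z => w z * g z) =ᶠ[𝓝 z] fun _ => 0 := by
        filter_upwards [notMem_tsupport_iff_eventuallyEq.1 hz] with y hy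
        simp [hy]
      exact continuousAt_const.congr this.symm
  · apply setIntegral_eq_integral_of_forall_compl_eq_zero
    intro z hz
    rw [image_eq_zero_of_notMem_tsupport (fun h => hz (hs h)), mul_zero]

lemma lap_tsupport_sub (η : ℂ → ℝ) : tsupport (lap η) ⊆ tsupport η := by
  apply closure_minimal _ (isClosed_tsupport _)
  intro z hz
  by_contra h
  exact hz (lap_tsupport η z h)

lemma integral_lap_zero {η : ℂ → ℝ} (h : ContDiff ℝ 2 η) (hc : HasCompactSupport η) :
    ∫ z, lap η z = 0 := by
  have := lap_ibp h hc (v := fun _ => 1) contDiff_const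
  simpa [lap] using this

lemma exists_pos_test {Ω : Set ℂ} (hO : IsOpen Ω) {ψ φ : ℂ → ℂ} (cm : CMap Ω ψ φ)
    {u : ℂ → ℝ} (hu : IsExhaustion u Ω) {r : ℝ} (hr : r < 0) :
    ∃ η : ℂ → ℝ, ContDiff ℝ 2 η ∧ HasCompactSupport η ∧ tsupport η ⊆ Ω ∧
      0 < ∫ z in Ω, max (u z) r * lap η z := by
  have hwc : ContinuousOn (fun z => max (u z) r) Ω := hu.subh.1.sup continuousOn_const
  have hsub : closedBall (0:ℂ) (1/2) ⊆ ball 0 1 := closedBall_subset_ball (by norm_num)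
  have hB : IsCompact (ψ '' closedBall (0:ℂ) (1/2)) := by
    apply (isCompact_closedBall _ _).image_of_continuousOn
    intro z hz
    exact (cm.ψd z (ball_subset_closedBall (hsub hz))).continuousAt.continuousWithinAt
  have hBΩ : ψ '' closedBall (0:ℂ) (1/2) ⊆ Ω := by
    rintro _ ⟨z, hz, rfl⟩
    exact cm.ψm z (hsub hz)
  obtain ⟨x0, hx0, hmax⟩ := hB.exists_isMaxOn ⟨ψ 0, 0, by simp, rfl⟩ (hwc.mono hBΩ)
  set m := - max (u x0) r with hm
  have hmpos : 0 < m := by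
    have := hu.neg x0 (hBΩ hx0)
    simp [hm, this, hr]
  set c := m / 2 with hc
  have hcpos : 0 < c := by positivity
  obtain ⟨hK2, hK2Ω⟩ := hu.exh (-c/2) (by linarith)
  set K2 := closure {z | z ∈ Ω ∧ u z < -c/2}
  have : ∃ a, 1/4 ≤ a ∧ a < 1 ∧ ∀ z ∈ K2, ‖φ z‖ ^ 2 ≤ a := by
    rcases K2.eq_empty_or_nonempty with h | h
    · exact ⟨1/4, le_rfl, by norm_num, by simp [h]⟩
    · obtain ⟨x1, hx1, hmax1⟩ := hK2.exists_isMaxOn h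
        (f := fun z => ‖φ z‖ ^ 2) ((cm.φd.continuousOn.mono hK2Ω).norm.pow 2)
      have h3 := cm.φm x1 (hK2Ω hx1)
      rw [mem_ball_zero_iff] at h3
      refine ⟨max (1/4) (‖φ x1‖ ^ 2), le_max_left _ _, max_lt (by norm_num) ?_, fun z hz =>
        le_max_of_le_right (hmax1 hz)⟩
      nlinarith [norm_nonneg (φ x1)]
  obtain ⟨a, ha1, ha2, ha3⟩ := this
  obtain ⟨C0, _, hrad⟩ := exists_radial
  obtain ⟨e, e1, e2, h1, h2, hec, -, heb, -, hkc, hk1, hk2, hk3, hk4, -, hk5⟩ :=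
    hrad a ((a+1)/2) ha1 (by linarith) (by linarith)
  obtain ⟨t1, t2, t3, t4⟩ := radial_test hO cm h1 h2 hec (b := (a+1)/2) (by linarith) heb
  set E := Ω.indicator (fun w => e (‖φ w‖ ^ 2)) with hE
  refine ⟨E, t1, t2, t3, ?_⟩
  have l1 := lap_contDiff t1
  have l2 := lap_hasCompactSupport t2
  have l3 := (lap_tsupport_sub E).trans t3
  obtain ⟨q1, q2, q3⟩ := cont_mul_aux hO hwc l1 l2 l3
  obtain ⟨p1, p2, p3⟩ := cont_mul_aux hO (w := fun z => max (u z) r + c) (hwc.add continuousOn_const) l1 l2 l3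
  have key : ∫ z in Ω, max (u z) r * lap E z = ∫ z, (max (u z) r + c) * lap E z := by
    rw [q3]
    simp only [add_mul]
    rw [integral_add (q1.integrable_of_hasCompactSupport q2)
      ((l1.integrable_of_hasCompactSupport l2).const_mul c), integral_const_mul,
      integral_lap_zero t1 t2]
    simp
  rw [key]
  have hin : ∀ z ∈ Ω, ‖φ z‖ ^ 2 ≤ 1/4 → max (u z) r + c < 0 := by
    intro z hz h
    have : z ∈ ψ '' closedBall (0:ℂ) (1/2) := by
      refine ⟨φ z, ?_, cm.ψφ z hz⟩
      rw [mem_closedBall_zero_iff]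
      nlinarith [norm_nonneg (φ z)]
    have := hmax this
    simp only [mem_ofPred_eq] at this
    linarith
  obtain ⟨x, hx0, hx1, hx⟩ := hk5
  refine p1.integral_pos_of_hasCompactSupport_nonneg_nonzero (x := ψ ((Real.sqrt x : ℝ) : ℂ)) p2 ?_ ?_
  · intro z
    simp only [Pi.zero_apply]
    by_cases hz : z ∈ Ω
    · rw [t4 z hz]
      rcases le_total (‖φ z‖ ^ 2) (1/4) with h | h
      · have := (hk1 _ (by positivity) h).1
        exact mul_nonneg_of_nonpos_of_nonpos (hin z hz h).le
          (mul_nonpos_of_nonneg_of_nonpos (by positivity) this)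
      · rcases le_or_gt (‖φ z‖ ^ 2) a with h' | h'
        · rw [hk3 _ h h']; simp
        · refine mul_nonneg ?_ (mul_nonneg (by positivity) (hk2 _ h))
          have : z ∉ K2 := fun hk => by linarith [ha3 z hk]
          have : ¬ (u z < -c/2) := fun hlt => this (subset_closure ⟨hz, hlt⟩)
          have := le_max_left (u z) r
          linarith
    · rw [image_eq_zero_of_notMem_tsupport (fun h => hz (l3 h)), mul_zero]
  · have hsq : ‖((Real.sqrt x : ℝ) : ℂ)‖ = Real.sqrt x := by
      rw [norm_real, Real.norm_of_nonneg (Real.sqrt_nonneg _)]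
    have hmem : ((Real.sqrt x : ℝ) : ℂ) ∈ ball (0:ℂ) 1 := by
      rw [mem_ball_zero_iff, hsq, Real.sqrt_lt' one_pos]; linarith
    have hz := cm.ψm _ hmem
    have hφ : ‖φ (ψ ((Real.sqrt x : ℝ) : ℂ))‖ ^ 2 = x := by
      rw [cm.φψ _ hmem, hsq, Real.sq_sqrt hx0.le]
    have hd : ‖deriv φ (ψ ((Real.sqrt x : ℝ) : ℂ))‖ ≠ 0 := by
      rw [norm_ne_zero_iff]
      exact left_ne_zero_of_mul_eq_one (cm.dd _ hmem)
    have h3 := hin _ hz (by rw [hφ]; exact hx1.le)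
    rw [t4 _ hz, hφ]
    refine mul_ne_zero h3.ne (mul_ne_zero (by positivity) hx.ne)

lemma riesz_locfin {Ω : Set ℂ} (hO : IsOpen Ω) {ψ φ : ℂ → ℂ} (cm : CMap Ω ψ φ)
    {u : ℂ → ℝ} (hu : IsExhaustion u Ω) {r : ℝ} (hr : r < 0) {ν : Measure ℂ}
    (hν : IsRieszMeasure (fun z => max (u z) r) Ω ν) {K : Set ℂ} (hK : IsCompact K) (hKΩ : K ⊆ Ω) :
    ν K < ⊤ := by
  have hwc : ContinuousOn (fun z => max (u z) r) Ω := hu.subh.1.sup continuousOn_const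
  obtain ⟨η, n1, n2, n3, n4⟩ := exists_pos_test hO cm hu hr
  obtain ⟨χ, c1, c2, c3, c4, c5⟩ := exists_cutoff hK hO hKΩ
  have i1 : Integrable η ν := by
    by_contra h
    have h1 := hν.2 η n1 n2 n3
    rw [integral_undef h] at h1
    simp only at h1
    linarith
  have i2 : Integrable χ ν := by
    by_contra h
    have h3 : ¬ Integrable (fun z => χ z + η z) ν := by
      intro h2
      apply h
      refine (h2.sub i1).congr (ae_of_all _ fun z => ?_)
      simp
    have h1 := hν.2 χ c1 c2 c3
    have ts : tsupport (fun z => χ z + η z) ⊆ Ω := (tsupport_add χ η).trans (union_subset c3 n3)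
    have h2 := hν.2 (fun z => χ z + η z) (c1.add n1) (c2.add n2) ts
    rw [integral_undef h] at h1
    rw [integral_undef h3] at h2
    have a1 := cont_mul_aux hO hwc (lap_contDiff c1) (lap_hasCompactSupport c2) ((lap_tsupport_sub χ).trans c3)
    have a2 := cont_mul_aux hO hwc (lap_contDiff n1) (lap_hasCompactSupport n2) ((lap_tsupport_sub η).trans n3)
    simp only [lap_add c1 n1, mul_add] at h2
    rw [integral_add (a1.1.integrable_of_hasCompactSupport a1.2.1).integrableOn
      (a2.1.integrable_of_hasCompactSupport a2.2.1).integrableOn] at h2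
    simp only at h1
    linarith
  have := i2.lintegral_lt_top
  refine lt_of_le_of_lt ?_ this
  calc ν K = ∫⁻ z, K.indicator 1 z ∂ν := by rw [lintegral_indicator_one hK.measurableSet]
    _ ≤ _ := by
      apply lintegral_mono
      intro z
      by_cases hz : z ∈ K
      · simp [hz, (c5 z hz).self_of_nhds]
      · simp [hz]

lemma sub_compact {Ω : Set ℂ} {u : ℂ → ℝ} (hu : IsExhaustion u Ω) {r : ℝ} (hr : r < 0) :
    IsCompact {z | z ∈ Ω ∧ u z ≤ r} := by
  obtain ⟨h1, h2⟩ := hu.exh (r/2) (by linarith)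
  have : {z | z ∈ Ω ∧ u z ≤ r} = closure {z | z ∈ Ω ∧ u z < r/2} ∩ u ⁻¹' (Iic r) := by
    ext z
    constructor
    · rintro ⟨a, b⟩
      exact ⟨subset_closure ⟨a, by linarith⟩, b⟩
    · rintro ⟨a, b⟩
      exact ⟨h2 a, b⟩
  rw [this]
  exact h1.of_isClosed_subset ((hu.subh.1.mono h2).preimage_isClosed_of_isClosed h1.isClosed isClosed_Iic)
    inter_subset_left

lemma sup_open {Ω : Set ℂ} (hO : IsOpen Ω) {u : ℂ → ℝ} (hu : IsExhaustion u Ω) (r : ℝ) :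
    IsOpen {z | z ∈ Ω ∧ r < u z} := hu.subh.1.isOpen_inter_preimage hO isOpen_Ioi

lemma riesz_eq {Ω : Set ℂ} (hO : IsOpen Ω) {u : ℂ → ℝ} (hu : IsExhaustion u Ω) {r : ℝ}
    {w w' : ℂ → ℝ} (hww : ∀ z ∈ Ω, r < u z → w z = w' z) {ν ν' : Measure ℂ}
    (hν : IsRieszMeasure w Ω ν) (hν' : IsRieszMeasure w' Ω ν')
    (f1 : ∀ K, IsCompact K → K ⊆ Ω → ν K < ⊤) (f2 : ∀ K, IsCompact K → K ⊆ Ω → ν' K < ⊤) :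
    ν.restrict {z | z ∈ Ω ∧ r < u z} = ν'.restrict {z | z ∈ Ω ∧ r < u z} := by
  have hs : {z | z ∈ Ω ∧ r < u z} ⊆ Ω := fun z hz => hz.1
  apply restrict_eq_of_test (sup_open hO hu r) (fun K a b => f1 K a (b.trans hs))
    (fun K a b => f2 K a (b.trans hs))
  intro χ c1 c2 c3
  rw [hν.2 χ c1 c2 (c3.trans hs), hν'.2 χ c1 c2 (c3.trans hs)]
  congr 1
  apply setIntegral_congr_fun hO.measurableSet
  intro z hz
  simp only
  by_cases h : z ∈ tsupport χ
  · rw [hww z hz (c3 h).2]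
  · rw [lap_tsupport χ z h]; simp

lemma main_id {Ω : Set ℂ} (hO : IsOpen Ω) {u : ℂ → ℝ} (hu : IsExhaustion u Ω) {r : ℝ} (hr : r < 0)
    {w w' : ℂ → ℝ} (hw : ContinuousOn w Ω) (hw' : ContinuousOn w' Ω)
    (hww : ∀ z ∈ Ω, r < u z → w z = w' z) {ν ν' : Measure ℂ}
    (hν : IsRieszMeasure w Ω ν) (hν' : IsRieszMeasure w' Ω ν')
    (f1 : ∀ K, IsCompact K → K ⊆ Ω → ν K < ⊤) (f2 : ∀ K, IsCompact K → K ⊆ Ω → ν' K < ⊤)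
    {v : ℂ → ℝ} (hv : ContDiffOn ℝ 2 v Ω) :
    ∫ z in {z | z ∈ Ω ∧ u z ≤ r}, v z ∂ν' = ∫ z in {z | z ∈ Ω ∧ u z ≤ r}, v z ∂ν +
      4⁻¹ * ∫ z in Ω, (w' z - w z) * lap v z := by
  set S := {z | z ∈ Ω ∧ u z ≤ r} with hS
  have hSc : IsCompact S := sub_compact hu hr
  have hSΩ : S ⊆ Ω := fun z hz => hz.1
  obtain ⟨χ, c1, c2, c3, c4, c5⟩ := exists_cutoff hSc hO hSΩ
  obtain ⟨d1, d2, d3⟩ := cutoff_mul hO c1 c2 c3 hv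
  have hrest : ν.restrict Sᶜ = ν'.restrict Sᶜ := by
    have : Sᶜ = {z | z ∈ Ω ∧ r < u z} ∪ Ωᶜ := by
      ext z
      simp only [hS, mem_compl_iff, mem_ofPred_eq, mem_union, not_and, not_le]
      tauto
    rw [this, Measure.restrict_union_congr]
    exact ⟨riesz_eq hO hu hww hν hν' f1 f2, by
      rw [Measure.restrict_eq_zero.2 hν.1, Measure.restrict_eq_zero.2 hν'.1]⟩
  have hint : ∀ ν : Measure ℂ, (∀ K, IsCompact K → K ⊆ Ω → ν K < ⊤) →
      Integrable (fun z => χ z * v z) ν := by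
    intro ν hν
    rw [← integrableOn_iff_integrable_of_support_subset (subset_tsupport _)]
    obtain ⟨M, hM⟩ := d1.continuous.bounded_above_of_compact_support d2
    exact Measure.integrableOn_of_bounded (M := M) (hν _ d2 d3).ne
      d1.continuous.aestronglyMeasurable (ae_of_all _ hM)
  have split : ∀ ν : Measure ℂ, (∀ K, IsCompact K → K ⊆ Ω → ν K < ⊤) →
      ∫ z, χ z * v z ∂ν = ∫ z in S, v z ∂ν + ∫ z in Sᶜ, χ z * v z ∂ν := by
    intro ν hν
    rw [← integral_add_compl hSc.measurableSet (hint ν hν)]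
    congr 1
    apply setIntegral_congr_fun hSc.measurableSet
    intro z hz
    simp [(c5 z hz).self_of_nhds]
  have e1 := hν.2 _ d1 d2 d3
  have e2 := hν'.2 _ d1 d2 d3
  rw [split ν f1] at e1
  rw [split ν' f2] at e2
  have a1 := cont_mul_aux hO hw (lap_contDiff d1) (lap_hasCompactSupport d2) ((lap_tsupport_sub _).trans d3)
  have a2 := cont_mul_aux hO hw' (lap_contDiff d1) (lap_hasCompactSupport d2) ((lap_tsupport_sub _).trans d3)
  have e3 : ∫ z in Ω, (w' z - w z) * lap v z = ∫ z in Ω, (w' z * lap (fun z => χ z * v z) z -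
      w z * lap (fun z => χ z * v z) z) := by
    apply setIntegral_congr_fun hO.measurableSet
    intro z hz
    simp only
    by_cases h : r < u z
    · rw [hww z hz h]; ring
    · have : (fun z => χ z * v z) =ᶠ[𝓝 z] v := by
        filter_upwards [c5 z ⟨hz, not_lt.1 h⟩] with y hy
        simp [hy]
      rw [lap_congr this]; ring
  rw [e3, integral_sub (a2.1.integrable_of_hasCompactSupport a2.2.1).integrableOn
      (a1.1.integrable_of_hasCompactSupport a1.2.1).integrableOn]
  rw [hrest] at e1
  linarith



structure MAP (Ω : Set ℂ) (u : ℂ → ℝ) (T : ℝ≥0∞) (μfam : ℝ → Measure ℂ) : Prop where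
  hT : T < ⊤
  fin : ∀ r < 0, μfam r univ ≤ T
  supp : ∀ r < 0, μfam r {z | z ∈ Ω ∧ u z ≤ r}ᶜ = 0
  mono : ∀ v : ℂ → ℝ, ContDiffOn ℝ 2 v Ω → (∀ z ∈ Ω, 0 ≤ v z) → (∀ z ∈ Ω, 0 ≤ lap v z) →
    ∀ r r', r < r' → r' < 0 → ∫ z, v z ∂(μfam r) ≤ ∫ z, v z ∂(μfam r')
  maj : ∀ v : ℂ → ℝ, ContDiffOn ℝ 2 v Ω → (∀ z ∈ Ω, 0 ≤ v z) → (∀ z ∈ Ω, 0 ≤ lap v z) →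
    ∀ r < 0, 4⁻¹ * ∫ z in Ω, (max (u z) r - u z) * lap v z ≤ ∫ z, v z ∂(μfam r)

lemma ma_props {Ω : Set ℂ} (hO : IsOpen Ω) {ψ φ : ℂ → ℂ} (cm : CMap Ω ψ φ)
    {u : ℂ → ℝ} (hu : IsExhaustion u Ω)
    {ν : Measure ℂ} (hν : IsRieszMeasure u Ω ν) (hfin : ν Set.univ < ⊤)
    {μfam : ℝ → Measure ℂ} (hμ : ∀ r : ℝ, r < 0 → IsMAMeasure u Ω ν r (μfam r)) :
    MAP Ω u (ν univ) μfam := by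
  have : IsFiniteMeasure ν := ⟨hfin⟩
  have hS : ∀ r < 0, IsCompact {z | z ∈ Ω ∧ u z ≤ r} := fun r hr => sub_compact hu hr
  have hSΩ : ∀ r, {z | z ∈ Ω ∧ u z ≤ r} ⊆ Ω := fun r z hz => hz.1
  have hwc : ∀ r, ContinuousOn (fun z => max (u z) r) Ω := fun r => hu.subh.1.sup continuousOn_const
  have hZm : ∀ r < 0, MeasurableSet {z | z ∈ Ω ∧ u z = r} := by
    intro r hr
    have : {z | z ∈ Ω ∧ u z = r} = {z | z ∈ Ω ∧ u z ≤ r} \ {z | z ∈ Ω ∧ u z < r} := by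
      ext z
      simp only [mem_ofPred_eq, Set.mem_sdiff, not_and, not_lt]
      constructor
      · rintro ⟨a, b⟩; exact ⟨⟨a, b.le⟩, fun _ => b.ge⟩
      · rintro ⟨⟨a, b⟩, c⟩; exact ⟨a, le_antisymm b (c a)⟩
    rw [this]
    exact (hS r hr).measurableSet.diff (hu.subh.1.isOpen_inter_preimage hO isOpen_Iio).measurableSet
  have fν : ∀ K, IsCompact K → K ⊆ Ω → ν K < ⊤ := fun K _ _ => measure_lt_top _ _
  have hint : ∀ (m : Measure ℂ) (A : Set ℂ) (r : ℝ) (v : ℂ → ℝ), r < 0 → ContDiffOn ℝ 2 v Ω →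
      (∀ K, IsCompact K → K ⊆ Ω → m K < ⊤) → A ⊆ {z | z ∈ Ω ∧ u z ≤ r} → IntegrableOn v A m := by
    intro m A r v hr hv hm hA
    apply IntegrableOn.mono_set _ hA
    obtain ⟨M, hM⟩ := (hS r hr).exists_bound_of_continuousOn (hv.continuousOn.mono (hSΩ r))
    exact IntegrableOn.of_bound (hm _ (hS r hr) (hSΩ r))
      ((hv.continuousOn.mono (hSΩ r)).aestronglyMeasurable (hS r hr).measurableSet) M
      ((ae_restrict_iff' (hS r hr).measurableSet).2 (ae_of_all _ hM))
  have hnn : ∀ (m : Measure ℂ) (A : Set ℂ) (v : ℂ → ℝ), MeasurableSet A → (∀ z ∈ Ω, 0 ≤ v z) → A ⊆ Ω →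
      0 ≤ᵐ[m.restrict A] v := by
    intro m A v hA hv hAΩ
    exact (ae_restrict_iff' hA).2 (ae_of_all _ fun z hz => hv z (hAΩ hz))
  -- basic package
  have base : ∀ r < 0, ∃ νr : Measure ℂ, IsRieszMeasure (fun z => max (u z) r) Ω νr ∧
      (∀ K, IsCompact K → K ⊆ Ω → νr K < ⊤) ∧
      μfam r ≤ νr.restrict {z | z ∈ Ω ∧ u z ≤ r} ∧
      νr {z | z ∈ Ω ∧ u z ≤ r} = ν {z | z ∈ Ω ∧ u z ≤ r} ∧
      νr.restrict {z | z ∈ Ω ∧ u z ≤ r} ≤ (μfam r).restrict {z | z ∈ Ω ∧ u z ≤ r} +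
        ν.restrict {z | z ∈ Ω ∧ u z = r} := by
    intro r hr
    obtain ⟨νr, h1, h2⟩ := hμ r hr
    have f1 : ∀ K, IsCompact K → K ⊆ Ω → νr K < ⊤ := fun K a b => riesz_locfin hO cm hu hr h1 a b
    have hww : ∀ z ∈ Ω, r < u z → u z = max (u z) r := fun z _ h => (max_eq_left h.le).symm
    have hcompl : {z | z ∈ Ω ∧ u z ≤ r}ᶜ = {z | z ∈ Ω ∧ r < u z} ∪ Ωᶜ := by
      ext z
      simp only [mem_compl_iff, mem_ofPred_eq, mem_union, not_and, not_le]
      tauto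
    have hrest : ν.restrict {z | z ∈ Ω ∧ u z ≤ r}ᶜ = νr.restrict {z | z ∈ Ω ∧ u z ≤ r}ᶜ := by
      rw [hcompl, Measure.restrict_union_congr]
      exact ⟨riesz_eq hO hu hww hν h1 fν f1, by
        rw [Measure.restrict_eq_zero.2 hν.1, Measure.restrict_eq_zero.2 h1.1]⟩
    have hfr : IsFiniteMeasure νr := by
      constructor
      have : νr univ = νr {z | z ∈ Ω ∧ u z ≤ r} + νr {z | z ∈ Ω ∧ u z ≤ r}ᶜ :=
        (measure_add_measure_compl (hS r hr).measurableSet).symm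
      rw [this]
      have h3 := congrArg (fun m => m univ) hrest
      simp only [Measure.restrict_apply_univ] at h3
      rw [← h3]
      exact ENNReal.add_lt_top.2 ⟨f1 _ (hS r hr) (hSΩ r), measure_lt_top _ _⟩
    refine ⟨νr, h1, f1, ?_, ?_, ?_⟩
    · rw [h2]
      apply Measure.sub_le_of_le_add
      conv_lhs => rw [← Measure.restrict_add_restrict_compl (μ := νr) (hS r hr).measurableSet, ← hrest]
      apply add_le_add le_rfl
      rw [hcompl]
      refine (Measure.restrict_union_le _ _).trans ?_
      rw [Measure.restrict_eq_zero.2 hν.1, add_zero]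
      refine Measure.restrict_mono ?_ le_rfl
      intro z hz
      exact ⟨hz.1, hz.2.le⟩
    · have h3 := main_id hO hu hr hu.subh.1 (hwc r) hww hν h1 fν f1 (v := fun _ => 1) contDiffOn_const
      have h4 : ∀ z, lap (fun _ => (1:ℝ)) z = 0 := fun z => by simp [lap]
      simp only [h4, mul_zero, integral_zero, add_zero, setIntegral_const, smul_eq_mul, mul_one] at h3
      exact (measureReal_eq_measureReal_iff).1 h3
    · have h3 : νr ≤ μfam r + ν.restrict {z | z ∈ Ω ∧ r ≤ u z} := by
        rw [h2]; exact le_sub_add_meas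
      have h4 := Measure.restrict_mono (le_refl {z | z ∈ Ω ∧ u z ≤ r}) h3
      rw [Measure.restrict_add, Measure.restrict_restrict (hS r hr).measurableSet] at h4
      refine h4.trans (add_le_add le_rfl (Measure.restrict_mono ?_ le_rfl))
      rintro z ⟨a, b⟩
      exact ⟨a.1, le_antisymm a.2 b.2⟩
  have fin : ∀ r < 0, μfam r univ ≤ ν univ := by
    intro r hr
    obtain ⟨νr, -, -, h3, h4, -⟩ := base r hr
    calc μfam r univ ≤ νr.restrict {z | z ∈ Ω ∧ u z ≤ r} univ := h3 _
      _ = ν {z | z ∈ Ω ∧ u z ≤ r} := by rw [Measure.restrict_apply_univ, h4]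
      _ ≤ _ := measure_mono (subset_univ _)
  have supp : ∀ r < 0, μfam r {z | z ∈ Ω ∧ u z ≤ r}ᶜ = 0 := by
    intro r hr
    obtain ⟨νr, -, -, h3, h4, -⟩ := base r hr
    refine le_antisymm ((h3 _).trans ?_) (zero_le)
    rw [Measure.restrict_apply (hS r hr).measurableSet.compl]
    simp
  have lower : ∀ r < 0, ∀ νr : Measure ℂ, (∀ K, IsCompact K → K ⊆ Ω → νr K < ⊤) → 
      νr.restrict {z | z ∈ Ω ∧ u z ≤ r} ≤ (μfam r).restrict {z | z ∈ Ω ∧ u z ≤ r} +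
        ν.restrict {z | z ∈ Ω ∧ u z = r} → ∀ v : ℂ → ℝ, ContDiffOn ℝ 2 v Ω → (∀ z ∈ Ω, 0 ≤ v z) → 
      ∫ z in {z | z ∈ Ω ∧ u z ≤ r}, v z ∂νr ≤ ∫ z, v z ∂(μfam r) +
        ∫ z in {z | z ∈ Ω ∧ u z = r}, v z ∂ν := by
    intro r hr νr f1 hle v hv hv0
    have hfμ : ∀ K, IsCompact K → K ⊆ Ω → μfam r K < ⊤ := fun K _ _ =>
      (measure_mono (subset_univ _)).trans_lt ((fin r hr).trans_lt hfin)
    have i1 := hint (μfam r) _ r v hr hv hfμ le_rfl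
    have i2 := hint ν {z | z ∈ Ω ∧ u z = r} r v hr hv fν (fun z hz => ⟨hz.1, hz.2.le⟩)
    have h5 := integral_mono_measure hle (f := v) (by
      rw [EventuallyLE, ae_add_measure_iff]
      exact ⟨hnn _ _ v (hS r hr).measurableSet hv0 (hSΩ r), hnn _ _ v (hZm r hr) hv0 (fun z hz => hz.1)⟩)
      (integrable_add_measure.2 ⟨i1, i2⟩)
    rw [integral_add_measure i1 i2] at h5
    rwa [Measure.restrict_eq_self_of_ae_mem (μ := μfam r) (s := {z | z ∈ Ω ∧ u z ≤ r})
      (by rw [ae_iff]; exact supp r hr)] at h5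
  refine ⟨hfin, fin, supp, ?_, ?_⟩
  · intro v hv hv0 hl r r' hrr hr'
    have hr : r < 0 := hrr.trans hr'
    obtain ⟨νr, a1, a2, a3, a4, a5⟩ := base r hr
    obtain ⟨νr', b1, b2, b3, b4, b5⟩ := base r' hr'
    have h1 := main_id hO hu hr' (hwc r) (hwc r') (by
      intro z hz h
      rw [max_eq_left h.le, max_eq_left (hrr.trans h).le]) a1 b1 a2 b2 hv
    have h2 := lower r' hr' νr' b2 b5 v hv hv0
    have h3 : 0 ≤ ∫ z in Ω, (max (u z) r' - max (u z) r) * lap v z := by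
      apply setIntegral_nonneg hO.measurableSet
      intro z hz
      exact mul_nonneg (sub_nonneg.2 (max_le_max le_rfl hrr.le)) (hl z hz)
    have h4 : ∫ z, v z ∂(μfam r) ≤ ∫ z in {z | z ∈ Ω ∧ u z ≤ r}, v z ∂νr :=
      integral_mono_measure a3 (hnn _ _ v (hS r hr).measurableSet hv0 (hSΩ r))
        (hint νr _ r v hr hv a2 le_rfl)
    have sZ : {z | z ∈ Ω ∧ u z = r'} ⊆ {z | z ∈ Ω ∧ r < u z} := by
      rintro z ⟨a, b⟩; exact ⟨a, by rw [b]; exact hrr⟩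
    have h5 : ν.restrict {z | z ∈ Ω ∧ u z = r'} = νr.restrict {z | z ∈ Ω ∧ u z = r'} :=
      Measure.restrict_congr_mono sZ
        (riesz_eq hO hu (r := r) (fun z _ h => (max_eq_left h.le).symm) hν a1 fν a2)
    have h6 : ∫ z in {z | z ∈ Ω ∧ u z ≤ r}, v z ∂νr + ∫ z in {z | z ∈ Ω ∧ u z = r'}, v z ∂νr ≤
        ∫ z in {z | z ∈ Ω ∧ u z ≤ r'}, v z ∂νr := by
      have s1 : {z | z ∈ Ω ∧ u z ≤ r} ⊆ {z | z ∈ Ω ∧ u z ≤ r'} := fun z hz => ⟨hz.1, hz.2.trans hrr.le⟩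
      have s2 : {z | z ∈ Ω ∧ u z = r'} ⊆ {z | z ∈ Ω ∧ u z ≤ r'} := fun z hz => ⟨hz.1, hz.2.le⟩
      rw [← setIntegral_union _ (hZm r' hr') (hint νr _ r' v hr' hv a2 s1) (hint νr _ r' v hr' hv a2 s2)]
      · exact setIntegral_mono_set (hint νr _ r' v hr' hv a2 le_rfl)
          (hnn _ _ v (hS r' hr').measurableSet hv0 (hSΩ r')) (union_subset s1 s2).eventuallyLE
      · rw [Set.disjoint_left]
        rintro z ⟨_, a⟩ ⟨_, b⟩
        linarith
    rw [← h5] at h6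
    linarith
  · intro v hv hv0 hl r hr
    obtain ⟨νr, a1, a2, a3, a4, a5⟩ := base r hr
    have h1 := main_id hO hu hr hu.subh.1 (hwc r) (fun z _ h => (max_eq_left h.le).symm) hν a1 fν a2 hv
    have h2 := lower r hr νr a2 a5 v hv hv0
    have h3 : ∫ z in {z | z ∈ Ω ∧ u z = r}, v z ∂ν ≤ ∫ z in {z | z ∈ Ω ∧ u z ≤ r}, v z ∂ν :=
      setIntegral_mono_set (hint ν _ r v hr hv fν le_rfl)
          (hnn _ _ v (hS r hr).measurableSet hv0 (hSΩ r)) 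
          (LE.le.eventuallyLE (fun z hz => ⟨hz.1, hz.2.le⟩))
    linarith



lemma vpow_facts {Ω : Set ℂ} (hO : IsOpen Ω) {f : ℂ → ℂ} (hf : DifferentiableOn ℂ f Ω) {q δ : ℝ}
    (hq : 0 < q) (hδ : 0 < δ) :
    ContDiffOn ℝ 2 (fun z => (‖f z‖ ^ 2 + δ) ^ q) Ω ∧
    (∀ z ∈ Ω, 0 ≤ (‖f z‖ ^ 2 + δ) ^ q) ∧
    (∀ z ∈ Ω, 0 ≤ lap (fun z => (‖f z‖ ^ 2 + δ) ^ q) z) := by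
  refine ⟨?_, fun z _ => by positivity, ?_⟩
  · have h1 : ContDiffOn ℝ 2 f Ω := (hf.contDiffOn hO).restrict_scalars ℝ
    refine ContDiffOn.rpow_const_of_ne ((h1.norm_sq ℝ).add contDiffOn_const) ?_
    intro z _
    positivity
  · intro z hz
    have := lap_comp_normSq hO hf (S := {x | -δ < x}) (e := fun x => (x + δ) ^ q)
      (e1 := fun x => q * (x + δ) ^ (q - 1)) (e2 := fun x => q * ((q - 1) * (x + δ) ^ (q - 1 - 1)))
      (by
        intro x hx
        have hx' : 0 < x + δ := by simp only [mem_ofPred_eq] at hx; linarith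
        have := ((hasDerivAt_id x).add_const δ).rpow_const (p := q) (Or.inl hx'.ne')
        simpa [mul_comm, mul_assoc] using this)
      (by
        intro x hx
        have hx' : 0 < x + δ := by simp only [mem_ofPred_eq] at hx; linarith
        have := (((hasDerivAt_id x).add_const δ).rpow_const (p := q - 1) (Or.inl hx'.ne')).const_mul q
        simpa [mul_comm, mul_assoc] using this)
      (by intro z _; simp only [mem_ofPred_eq]; nlinarith [sq_nonneg ‖f z‖]) hz
    rw [this]
    have hx : 0 < ‖f z‖ ^ 2 + δ := by positivity
    set x := ‖f z‖ ^ 2 with hxd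
    have hx0 : 0 ≤ x := by positivity
    have e : (x + δ) ^ (q - 1) = (x + δ) ^ (q - 1 - 1) * (x + δ) := by
      conv_rhs => rw [← Real.rpow_add_one hx.ne']
      congr 1; ring
    rw [e]
    have : q * ((x + δ) ^ (q - 1 - 1) * (x + δ)) + x * (q * ((q - 1) * (x + δ) ^ (q - 1 - 1))) =
      q * (x + δ) ^ (q - 1 - 1) * (q * x + δ) := by ring
    rw [this]
    positivity

lemma MAP.integrable {Ω : Set ℂ} {u : ℂ → ℝ} {T : ℝ≥0∞} {μfam : ℝ → Measure ℂ}
    (M : MAP Ω u T μfam) (hu : IsExhaustion u Ω) {E : Type*} [NormedAddCommGroup E] {g : ℂ → E} (hg : ContinuousOn g Ω)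
    {r : ℝ} (hr : r < 0) : Integrable g (μfam r) := by
  have hS := sub_compact hu hr
  have hSΩ : {z | z ∈ Ω ∧ u z ≤ r} ⊆ Ω := fun z hz => hz.1
  rw [← Measure.restrict_eq_self_of_ae_mem (μ := μfam r) (s := {z | z ∈ Ω ∧ u z ≤ r})
      (by rw [ae_iff]; exact M.supp r hr)]
  obtain ⟨B, hB⟩ := hS.exists_bound_of_continuousOn (hg.mono hSΩ)
  exact IntegrableOn.of_bound ((measure_mono (subset_univ _)).trans_lt ((M.fin r hr).trans_lt M.hT))
      ((hg.mono hSΩ).aestronglyMeasurable_of_isCompact hS hS.measurableSet) B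
      ((ae_restrict_iff' hS.measurableSet).2 (ae_of_all _ hB))

lemma MAP.ae_mem {Ω : Set ℂ} {u : ℂ → ℝ} {T : ℝ≥0∞} {μfam : ℝ → Measure ℂ}
    (M : MAP Ω u T μfam) {r : ℝ} (hr : r < 0) : ∀ᵐ z ∂(μfam r), z ∈ Ω ∧ u z ≤ r := by
  rw [ae_iff]; exact M.supp r hr

lemma MAP.mono_pow {Ω : Set ℂ} (hO : IsOpen Ω) {u : ℂ → ℝ} {T : ℝ≥0∞} {μfam : ℝ → Measure ℂ}
    (M : MAP Ω u T μfam) (hu : IsExhaustion u Ω) {f : ℂ → ℂ} (hf : DifferentiableOn ℂ f Ω) {p : ℝ}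
    (hp : 0 < p) {r r' : ℝ} (hrr : r ≤ r') (hr' : r' < 0) :
    ∫ z, ‖f z‖ ^ p ∂(μfam r) ≤ ∫ z, ‖f z‖ ^ p ∂(μfam r') := by
  rcases hrr.eq_or_lt with rfl | hlt
  · exact le_rfl
  have hc : ∀ δ, 0 ≤ δ → ContinuousOn (fun z => (‖f z‖ ^ 2 + δ) ^ (p / 2)) Ω := by
    intro δ hδ
    exact ((hf.continuousOn.norm.pow 2).add continuousOn_const).rpow_const
      (fun z _ => Or.inr (by positivity))
  have lim : ∀ s < 0, Tendsto (fun δ => ∫ z, (‖f z‖ ^ 2 + δ) ^ (p / 2) ∂(μfam s)) (𝓝[>] 0)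
      (𝓝 (∫ z, ‖f z‖ ^ p ∂(μfam s))) := by
    intro s hs
    apply tendsto_integral_filter_of_dominated_convergence (fun z => (‖f z‖ ^ 2 + 1) ^ (p / 2))
    · filter_upwards [self_mem_nhdsWithin] with δ hδ
      exact (M.integrable hu (hc δ (le_of_lt hδ)) hs).aestronglyMeasurable
    · filter_upwards [self_mem_nhdsWithin, mem_nhdsWithin_of_mem_nhds (Iio_mem_nhds one_pos)] with δ hδ hδ1
      refine ae_of_all _ fun z => ?_
      have : (0:ℝ) < δ := hδ
      have : δ < 1 := hδ1
      rw [Real.norm_of_nonneg (by positivity)]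
      apply Real.rpow_le_rpow (by positivity) (by linarith) (by positivity)
    · exact M.integrable hu (hc 1 zero_le_one) hs
    · refine ae_of_all _ fun z => ?_
      have h1 : ‖f z‖ ^ p = (‖f z‖ ^ 2 + 0) ^ (p / 2) := by
        rw [add_zero, ← Real.rpow_natCast, ← Real.rpow_mul (norm_nonneg _)]
        congr 1; push_cast; ring
      rw [h1]
      have : ContinuousAt (fun δ : ℝ => (‖f z‖ ^ 2 + δ) ^ (p / 2)) 0 :=
        (continuousAt_const.add continuousAt_id).rpow_const (Or.inr (by positivity))
      exact this.tendsto.mono_left nhdsWithin_le_nhds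
  refine le_of_tendsto_of_tendsto (lim r (hlt.trans hr')) (lim r' hr') ?_
  filter_upwards [self_mem_nhdsWithin] with δ hδ
  obtain ⟨a, b, c⟩ := vpow_facts hO hf (q := p / 2) (by positivity) hδ
  exact M.mono _ a b c r r' hlt hr'



lemma hopf {Ω : Set ℂ} (hO : IsOpen Ω) (hbd : Bornology.IsBounded Ω) {ψ φ : ℂ → ℂ} (cm : CMap Ω ψ φ)
    {u : ℂ → ℝ} (hu : IsExhaustion u Ω) :
    ∃ c : ℝ, 0 < c ∧ ∀ w ∈ Ω, u w ≤ -c * (1 - ‖φ w‖ ^ 2) := by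
  have comp : ∀ t < 1, IsCompact (ψ '' closedBall (0:ℂ) t) ∧ ψ '' closedBall (0:ℂ) t ⊆ Ω := by
    intro t ht
    have hsub : closedBall (0:ℂ) t ⊆ ball 0 1 := closedBall_subset_ball ht
    constructor
    · apply (isCompact_closedBall _ _).image_of_continuousOn
      intro z hz
      exact (cm.ψd z (ball_subset_closedBall (hsub hz))).continuousAt.continuousWithinAt
    · rintro _ ⟨z, hz, rfl⟩
      exact cm.ψm z (hsub hz)
  have memB : ∀ t, ∀ z ∈ Ω, ‖φ z‖ ≤ t → z ∈ ψ '' closedBall (0:ℂ) t := fun t z hz h =>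
    ⟨φ z, by simpa using h, cm.ψφ z hz⟩
  have normB : ∀ t < 1, ∀ z ∈ ψ '' closedBall (0:ℂ) t, ‖φ z‖ ≤ t := by
    rintro t ht _ ⟨z, hz, rfl⟩
    rw [cm.φψ z (closedBall_subset_ball ht hz)]
    simpa using hz
  obtain ⟨hB, hBΩ⟩ := comp (1/2) (by norm_num)
  obtain ⟨x0, hx0, hmax⟩ := hB.exists_isMaxOn ⟨ψ 0, 0, by simp, rfl⟩ (hu.subh.1.mono hBΩ)
  set m := - u x0 with hm
  have hmpos : 0 < m := by have := hu.neg x0 (hBΩ hx0); linarith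
  have hin : ∀ z ∈ Ω, ‖φ z‖ ≤ 1/2 → u z ≤ -m := fun z hz h => by
    have := hmax (memB _ z hz h)
    simp only [mem_ofPred_eq] at this
    linarith
  have hl2 : 0 < Real.log 2 := Real.log_pos (by norm_num)
  set c' := m / Real.log 2 with hc'
  have hc'pos : 0 < c' := by positivity
  obtain ⟨R, hR⟩ := hbd.exists_norm_le
  have main : ∀ w ∈ Ω, 1/2 ≤ ‖φ w‖ → u w ≤ c' * Real.log ‖φ w‖ := by
    intro w0 hw0 hφ0
    by_contra hcon
    push Not at hcon
    set η := u w0 - c' * Real.log ‖φ w0‖ with hη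
    have hηpos : 0 < η := by linarith
    set ε := η / (4 * (R ^ 2 + 1)) with hε
    have hεpos : 0 < ε := by positivity
    have hεR : ∀ w ∈ Ω, ε * ‖w‖ ^ 2 ≤ η / 4 := by
      intro w hw
      have h1 : ‖w‖ ^ 2 ≤ R ^ 2 + 1 := by
        have := hR w hw
        nlinarith [norm_nonneg w]
      calc ε * ‖w‖ ^ 2 ≤ ε * (R ^ 2 + 1) := by gcongr
        _ = η / 4 := by rw [hε]; field_simp
    -- choose t
    set t := max ((1 + ‖φ w0‖) / 2) (Real.exp (-(η / (4 * c')))) with ht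
    have hφ0' : ‖φ w0‖ < 1 := by simpa using cm.φm w0 hw0
    have ht1 : t < 1 := max_lt (by linarith) (by rw [Real.exp_lt_one_iff]; simp; positivity)
    have htφ : ‖φ w0‖ < t := lt_of_lt_of_le (by linarith) (le_max_left _ _)
    have htlog : -(c' * Real.log t) ≤ η / 4 := by
      have h1 : -(η / (4 * c')) ≤ Real.log t := by
        rw [Real.le_log_iff_exp_le (by linarith [norm_nonneg (φ w0)])]; exact le_max_right _ _
      have h2 : c' * (-(η / (4 * c'))) ≤ c' * Real.log t := by gcongr
      have h3 : c' * (-(η / (4 * c'))) = - (η / 4) := by field_simp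
      linarith
    obtain ⟨hK, hKΩ⟩ := comp t ht1
    have hA : IsCompact (ψ '' closedBall (0:ℂ) t ∩ (fun z => ‖φ z‖) ⁻¹' (Ici (1/2))) :=
      hK.of_isClosed_subset ((cm.φd.continuousOn.mono hKΩ).norm.preimage_isClosed_of_isClosed
        hK.isClosed isClosed_Ici) inter_subset_left
    set A := ψ '' closedBall (0:ℂ) t ∩ (fun z => ‖φ z‖) ⁻¹' (Ici (1/2)) with hAd
    have hAΩ : A ⊆ Ω := inter_subset_left.trans hKΩ
    have hA2 : ∀ z ∈ A, 1/2 ≤ ‖φ z‖ := fun z hz => hz.2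
    have hgc : ContinuousOn (fun w => u w - c' * Real.log ‖φ w‖ + ε * ‖w‖ ^ 2) A := by
      refine ((hu.subh.1.mono hAΩ).sub (continuousOn_const.mul ?_)).add (by fun_prop)
      refine ((cm.φd.continuousOn.mono hAΩ).norm).log ?_
      intro z hz
      have := hA2 z hz
      linarith
    have hw0A : w0 ∈ A := ⟨memB _ _ hw0 htφ.le, hφ0⟩
    obtain ⟨w1, hw1, hmx⟩ := hA.exists_isMaxOn ⟨w0, hw0A⟩ hgc
    have hmx' : ∀ w ∈ A, u w - c' * Real.log ‖φ w‖ + ε * ‖w‖ ^ 2 ≤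
      u w1 - c' * Real.log ‖φ w1‖ + ε * ‖w1‖ ^ 2 := fun w hw => hmx hw
    have hge : η ≤ u w1 - c' * Real.log ‖φ w1‖ + ε * ‖w1‖ ^ 2 := by
      have := hmx' w0 hw0A
      have h0 : 0 ≤ ε * ‖w0‖ ^ 2 := by positivity
      linarith
    have hw1Ω := hAΩ hw1
    have hb1 := hεR w1 hw1Ω
    have hlow : 1/2 < ‖φ w1‖ := by
      rcases (hA2 w1 hw1).eq_or_lt with h | h
      · exfalso
        have h1 := hin w1 hw1Ω h.symm.le
        rw [← h] at hge
        have h2 : c' * Real.log (1/2) = -m := by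
          rw [one_div, Real.log_inv, hc']; field_simp
        linarith
      · exact h
    have hup : ‖φ w1‖ < t := by
      rcases (normB t ht1 w1 hw1.1).eq_or_lt with h | h
      · exfalso
        rw [h] at hge
        have := hu.neg w1 hw1Ω
        linarith
      · exact h
    have hnh : ∀ᶠ w in 𝓝 w1, w ∈ Ω ∧ ‖φ w‖ ∈ Ioo (1/2) t := by
      have hcφ : ContinuousAt (fun w => ‖φ w‖) w1 :=
        (cm.φd.continuousOn.continuousAt (hO.mem_nhds hw1Ω)).norm
      exact (hO.eventually_mem hw1Ω).and (hcφ.eventually (Ioo_mem_nhds hlow hup))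
    obtain ⟨ρ, hρ, hball⟩ := Metric.nhds_basis_closedBall.mem_iff.1 hnh
    have hsubm := hu.subh.2 w1 hw1Ω ρ hρ (fun w hw => (hball hw).1)
    set Cc := u w1 - c' * Real.log ‖φ w1‖ + ε * ‖w1‖ ^ 2 - ε * ρ ^ 2 + ε * ‖w1‖ ^ 2 with hCc
    set Q : ℂ → ℝ := fun w => Cc + (c' * Real.log ‖φ w‖ - (2 * ε) * ((starRingEnd ℂ) w1 * w).re) with hQ
    have hQh : InnerProductSpace.HarmonicOnNhd Q (closedBall w1 |ρ|) := by
      intro w hw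
      rw [abs_of_pos hρ] at hw
      have han : AnalyticAt ℂ φ w := cm.φd.analyticAt (hO.mem_nhds (hball hw).1)
      have hne : φ w ≠ 0 := by
        have := (hball hw).2.1
        intro h0; rw [h0] at this; norm_num at this
      have a1 := (han.harmonicAt_log_norm hne).const_smul (c := c')
      have a2 : InnerProductSpace.HarmonicAt (fun w => ((starRingEnd ℂ) w1 * w).re) w :=
        AnalyticAt.harmonicAt_re (by fun_prop)
      exact (InnerProductSpace.harmonicAt_const Cc).add (a1.sub (a2.const_smul (c := 2 * ε)))
    have hQav := hQh.circleAverage_eq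
    have huc : ContinuousOn u (sphere w1 |ρ|) := hu.subh.1.mono (by
      rw [abs_of_pos hρ]; exact fun w hw => (hball (sphere_subset_closedBall hw)).1)
    have hle : Real.circleAverage u w1 ρ ≤ Real.circleAverage Q w1 ρ := by
      apply Real.circleAverage_mono huc.circleIntegrable'
        (hQh.continuousOn.mono sphere_subset_closedBall).circleIntegrable'
      intro w hw
      rw [abs_of_pos hρ] at hw
      have hw' := hball (sphere_subset_closedBall hw)
      have h1 := hmx' w ⟨memB _ _ hw'.1 hw'.2.2.le, hw'.2.1.le⟩
      have h2 : ‖w - w1‖ = ρ := by simpa [dist_eq_norm] using hw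
      have h3 : ‖w‖ ^ 2 = 2 * ((starRingEnd ℂ) w1 * w).re - ‖w1‖ ^ 2 + ρ ^ 2 := by
        rw [← h2, ← normSq_eq_norm_sq, ← normSq_eq_norm_sq, ← normSq_eq_norm_sq]
        simp [normSq_apply]; ring
      simp only [hQ, hCc]
      rw [h3] at h1
      linarith
    rw [hQav] at hle
    have hle2 : u w1 ≤ Real.circleAverage u w1 ρ := by
      rw [Real.circleAverage_def, smul_eq_mul]
      exact hsubm
    have h3 : ((starRingEnd ℂ) w1 * w1).re = ‖w1‖ ^ 2 := by
      rw [← normSq_eq_norm_sq]; simp [normSq_apply]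
    simp only [hQ, hCc, h3] at hle
    have : 0 < ε * ρ ^ 2 := by positivity
    linarith
  refine ⟨min m (c' / 2), by positivity, ?_⟩
  intro w hw
  have hlt : ‖φ w‖ < 1 := by simpa using cm.φm w hw
  have h1 : 0 ≤ 1 - ‖φ w‖ ^ 2 := by nlinarith [norm_nonneg (φ w)]
  rcases le_total (‖φ w‖) (1/2) with h | h
  · have := hin w hw h
    have h2 : min m (c'/2) * (1 - ‖φ w‖ ^ 2) ≤ m * 1 :=
      mul_le_mul (min_le_left _ _) (by nlinarith [norm_nonneg (φ w)]) h1 hmpos.le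
    linarith
  · have h2 := main w hw h
    have h3 : Real.log ‖φ w‖ ≤ -(1 - ‖φ w‖ ^ 2) / 2 := by
      have h4 := Real.log_le_sub_one_of_pos (x := ‖φ w‖ ^ 2) (by positivity)
      rw [Real.log_pow] at h4
      push_cast at h4
      linarith
    have h5 : c' * Real.log ‖φ w‖ ≤ c' * (-(1 - ‖φ w‖ ^ 2) / 2) := by gcongr
    have h6 : min m (c'/2) * (1 - ‖φ w‖ ^ 2) ≤ (c'/2) * (1 - ‖φ w‖ ^ 2) := by
      gcongr; exact min_le_right _ _
    linarith



lemma ring_bound {Ω : Set ℂ} (hO : IsOpen Ω) {ψ φ : ℂ → ℂ} (cm : CMap Ω ψ φ)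
    {u : ℂ → ℝ} (hu : IsExhaustion u Ω) {T : ℝ≥0∞} {μfam : ℝ → Measure ℂ} (M : MAP Ω u T μfam)
    {c : ℝ} (hc : 0 < c) (hopf : ∀ w ∈ Ω, u w ≤ -c * (1 - ‖φ w‖ ^ 2))
    {v : ℂ → ℝ} (hv : ContDiffOn ℝ 2 v Ω) (hv0 : ∀ z ∈ Ω, 0 ≤ v z) (hvl : ∀ z ∈ Ω, 0 ≤ lap v z)
    {N : ℝ} (hN : ∀ r < 0, ∫ z, v z ∂(μfam r) ≤ N) :
    ∃ C' : ℝ, ∀ a b : ℝ, 1/4 ≤ a → a < b → b < 1 → ∃ k : ℝ → ℝ, Continuous k ∧ (∀ x, 0 ≤ k x) ∧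
      (∀ x, x ≤ a → k x = 0) ∧ (∀ x, b ≤ x → k x = 0) ∧ ∫ x in a..b, k x = 1 ∧
      ∫ z in Ω, v z * (4 * ‖deriv φ z‖ ^ 2 * k (‖φ z‖ ^ 2)) ≤ C' := by
  obtain ⟨C0, hC0, hrad⟩ := exists_radial
  have hsub : closedBall (0:ℂ) (1/2) ⊆ ball 0 1 := closedBall_subset_ball (by norm_num)
  have hB : IsCompact (ψ '' closedBall (0:ℂ) (1/2)) := by
    apply (isCompact_closedBall _ _).image_of_continuousOn
    intro z hz
    exact (cm.ψd z (ball_subset_closedBall (hsub hz))).continuousAt.continuousWithinAt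
  have hBΩ : ψ '' closedBall (0:ℂ) (1/2) ⊆ Ω := by
    rintro _ ⟨z, hz, rfl⟩
    exact cm.ψm z (hsub hz)
  set B := ψ '' closedBall (0:ℂ) (1/2) with hBd
  have memB : ∀ z ∈ Ω, ‖φ z‖ ^ 2 ≤ 1/4 → z ∈ B := fun z hz h =>
    ⟨φ z, by rw [mem_closedBall_zero_iff]; nlinarith [norm_nonneg (φ z)], cm.ψφ z hz⟩
  have hdc : ContinuousOn (deriv φ) Ω := (cm.φd.deriv hO).continuousOn
  set J : ℂ → ℝ := fun z => v z * (4 * ‖deriv φ z‖ ^ 2) with hJ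
  have hJc : ContinuousOn J Ω := hv.continuousOn.mul (continuousOn_const.mul (hdc.norm.pow 2))
  have hJi : IntegrableOn J B := (hJc.mono hBΩ).integrableOn_compact hB
  have hJ0 : ∀ z ∈ Ω, 0 ≤ J z := fun z hz => mul_nonneg (hv0 z hz) (by positivity)
  refine ⟨(64 / c) * N + C0 * ∫ z in B, J z, fun a b ha hab hb => ?_⟩
  obtain ⟨e, e1, e2, h1, h2, hec, he0, heb, he8, hkc, hk1, hk2, hk3, hk4, hk5, -⟩ :=
    hrad a b ha hab hb
  obtain ⟨t1, t2, t3, t4⟩ := radial_test hO cm h1 h2 hec hb heb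
  set E := Ω.indicator (fun w => e (‖φ w‖ ^ 2)) with hE
  have hEz : ∀ z ∈ Ω, E z = e (‖φ z‖ ^ 2) := fun z hz => indicator_of_mem hz _
  have hlt : ∀ z ∈ Ω, ‖φ z‖ ^ 2 < 1 := fun z hz => by
    have := cm.φm z hz
    rw [mem_ball_zero_iff] at this
    nlinarith [norm_nonneg (φ z)]
  set k : ℝ → ℝ := fun x => e1 (max x (1/4)) + (max x (1/4)) * e2 (max x (1/4)) with hk
  have hkC : Continuous k := hkc.comp (continuous_id.max continuous_const)
  have hk0 : ∀ x, 0 ≤ k x := fun x => hk2 _ (le_max_right _ _)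
  have hkge : ∀ x, 1/4 ≤ x → k x = e1 x + x * e2 x := fun x hx => by simp only [hk, max_eq_left hx]
  refine ⟨k, hkC, hk0, ?_, ?_, ?_, ?_⟩
  · intro x hx
    exact hk3 _ (le_max_right _ _) (max_le hx ha)
  · intro x hx
    exact hk4 _ (le_max_of_le_left hx)
  · rw [← hk5]
    apply intervalIntegral.integral_congr
    intro x hx
    rw [uIcc_of_le hab.le] at hx
    exact hkge x (ha.trans hx.1)
  -- choose r
  have hr : ∃ r < 0, ∀ z ∈ Ω, E z ≤ (16 / c) * (max (u z) r - u z) := by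
    have : ∃ r < 0, ∀ z ∈ tsupport E, u z ≤ 2 * r := by
      rcases (tsupport E).eq_empty_or_nonempty with h | h
      · exact ⟨-1, by norm_num, by simp [h]⟩
      · obtain ⟨x1, hx1, hmax1⟩ := t2.isCompact.exists_isMaxOn h (hu.subh.1.mono t3)
        refine ⟨u x1 / 2, by linarith [hu.neg x1 (t3 hx1)], fun z hz => ?_⟩
        have := hmax1 hz
        simp only [mem_ofPred_eq] at this
        linarith
    obtain ⟨r, hr, hr2⟩ := this
    refine ⟨r, hr, fun z hz => ?_⟩
    by_cases hs : z ∈ tsupport E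
    · have a1 := he8 (‖φ z‖ ^ 2) (by positivity) (hlt z hz).le
      have a2 := hopf z hz
      have a3 := hr2 z hs
      have a4 := le_max_right (u z) r
      rw [hEz z hz]
      have a5 : 1 - ‖φ z‖ ^ 2 ≤ (1 / c) * (-u z) := by
        rw [div_mul_eq_mul_div, le_div_iff₀ hc]; linarith
      have a6 : (1 / c) * (-u z) ≤ (1 / c) * (2 * (max (u z) r - u z)) := by
        gcongr; linarith
      have a7 : (16 / c) * (max (u z) r - u z) = 8 * ((1 / c) * (2 * (max (u z) r - u z))) := by ring
      linarith
    · rw [image_eq_zero_of_notMem_tsupport hs]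
      exact mul_nonneg (by positivity) (sub_nonneg.2 (le_max_left _ _))
  obtain ⟨r, hr, hEr⟩ := hr
  have hS := sub_compact hu hr
  have hSΩ : {z | z ∈ Ω ∧ u z ≤ r} ⊆ Ω := fun z hz => hz.1
  obtain ⟨χ, c1, c2, c3, c4, c5⟩ := exists_cutoff (t2.isCompact.union hS) hO (union_subset t3 hSΩ)
  obtain ⟨d1, d2, d3⟩ := cutoff_mul hO c1 c2 c3 hv
  have l3 := (lap_tsupport_sub E).trans t3
  have l4 := (lap_tsupport_sub _).trans d3
  obtain ⟨p1, p2, p3⟩ := cont_mul_aux hO hv.continuousOn (lap_contDiff t1) (lap_hasCompactSupport t2) l3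
  have hnear : ∀ z ∈ tsupport E ∪ {z | z ∈ Ω ∧ u z ≤ r}, lap (fun z => χ z * v z) z = lap v z := by
    intro z hz
    apply lap_congr
    filter_upwards [c5 z hz] with y hy
    simp [hy]
  have ibp : ∫ z in Ω, v z * lap E z = ∫ z in Ω, E z * lap v z := by
    have h3 := lap_ibp t1 t2 d1
    have q3 : ∫ z in Ω, E z * lap v z = ∫ z, E z * lap v z :=
      setIntegral_eq_integral_of_forall_compl_eq_zero (fun z hz => by
        rw [image_eq_zero_of_notMem_tsupport (fun h => hz (t3 h)), zero_mul])
    rw [p3, q3]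
    refine Eq.trans ?_ (h3.trans ?_)
    · congr 1; ext z
      by_cases hs : z ∈ tsupport E
      · simp [(c5 z (Or.inl hs)).self_of_nhds]
      · simp [lap_tsupport E z hs]
    · congr 1; ext z
      by_cases hs : z ∈ tsupport E
      · rw [hnear z (Or.inl hs)]
      · simp [image_eq_zero_of_notMem_tsupport hs]
  have hmaxc : ContinuousOn (fun z => max (u z) r - u z) Ω :=
    (hu.subh.1.sup continuousOn_const).sub hu.subh.1
  have q := cont_mul_aux hO hmaxc (lap_contDiff d1) (lap_hasCompactSupport d2) l4
  have i1 : IntegrableOn (fun z => (max (u z) r - u z) * lap v z) Ω := by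
    refine IntegrableOn.congr_fun (q.1.integrable_of_hasCompactSupport q.2.1).integrableOn ?_ hO.measurableSet
    intro z hz
    simp only
    rcases le_or_gt (u z) r with h | h
    · rw [hnear z (Or.inr ⟨hz, h⟩)]
    · rw [max_eq_left h.le]; simp
  have b1 : ∫ z in Ω, E z * lap v z ≤ ∫ z in Ω, (16 / c) * ((max (u z) r - u z) * lap v z) := by
    apply integral_mono_of_nonneg
    · refine (ae_restrict_iff' hO.measurableSet).2 (ae_of_all _ fun z hz => ?_)
      simp only [Pi.zero_apply]
      rw [hEz z hz]
      exact mul_nonneg (he0 _ (by positivity)) (hvl z hz)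
    · exact i1.const_mul _
    · refine (ae_restrict_iff' hO.measurableSet).2 (ae_of_all _ fun z hz => ?_)
      simp only
      rw [← mul_assoc]
      exact mul_le_mul_of_nonneg_right (hEr z hz) (hvl z hz)
  rw [integral_const_mul] at b1
  have b2 := M.maj v hv hv0 hvl r hr
  have b3 := hN r hr
  have b4 : ∫ z in Ω, v z * lap E z ≤ (64 / c) * N := by
    rw [ibp]
    refine b1.trans ?_
    have : ∫ z in Ω, (max (u z) r - u z) * lap v z ≤ 4 * N := by linarith
    calc _ ≤ (16 / c) * (4 * N) := by gcongr
      _ = _ := by ring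
  have i2 : IntegrableOn (fun z => C0 * B.indicator J z) Ω := by
    apply Integrable.const_mul
    exact ((integrable_indicator_iff hB.measurableSet).2 hJi).integrableOn
  have i3 : IntegrableOn (fun z => v z * lap E z) Ω := (p1.integrable_of_hasCompactSupport p2).integrableOn
  have b5 : ∫ z in Ω, v z * (4 * ‖deriv φ z‖ ^ 2 * k (‖φ z‖ ^ 2)) ≤
      ∫ z in Ω, (v z * lap E z + C0 * B.indicator J z) := by
    apply integral_mono_of_nonneg
    · refine (ae_restrict_iff' hO.measurableSet).2 (ae_of_all _ fun z hz => ?_)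
      exact mul_nonneg (hv0 z hz) (mul_nonneg (by positivity) (hk0 _))
    · exact i3.add i2
    · refine (ae_restrict_iff' hO.measurableSet).2 (ae_of_all _ fun z hz => ?_)
      simp only
      rw [t4 z hz]
      have e3 : ∀ y, v z * (4 * ‖deriv φ z‖ ^ 2 * y) = J z * y := fun y => by simp only [hJ]; ring
      rw [e3, e3]
      rcases le_or_gt (‖φ z‖ ^ 2) (1/4) with h | h
      · rw [indicator_of_mem (memB z hz h)]
        have h6 : k (‖φ z‖ ^ 2) = 0 := hk3 _ (le_max_right _ _) (max_le (h.trans ha) ha)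
        rw [h6]
        have h7 := (hk1 _ (by positivity) h).2
        nlinarith [hJ0 z hz]
      · rw [hkge _ h.le]
        have : 0 ≤ B.indicator J z := indicator_nonneg (fun y hy => hJ0 y (hBΩ hy)) z
        nlinarith
  rw [integral_add i3 i2, integral_const_mul, setIntegral_indicator hB.measurableSet,
    inter_eq_self_of_subset_right hBΩ] at b5
  linarith



lemma polar_int {G : ℂ → ℝ} (hG : Continuous G) (h0 : ∀ z, 1 ≤ ‖z‖ → G z = 0) :
    ∫ z, G z = ∫ t in (0:ℝ)..1, t * (2 * π * Real.circleAverage G 0 t) := by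
  rw [← Complex.integral_comp_polarCoord_symm]
  have hsymm : ∀ p : ℝ × ℝ, Complex.polarCoord.symm p = circleMap 0 p.1 p.2 := by
    intro p
    rw [Complex.polarCoord_symm_apply, circleMap]
    simp [Complex.exp_mul_I]
  have hcont : Continuous fun p : ℝ × ℝ => p.1 • G (Complex.polarCoord.symm p) := by
    simp_rw [hsymm]
    unfold circleMap
    fun_prop
  have hz : ∀ p : ℝ × ℝ, p ∈ (Ioi 0 ×ˢ Ioo (-π) π : Set (ℝ×ℝ)) \ (Icc 0 1 ×ˢ Icc (-π) π) →
      p.1 • G (Complex.polarCoord.symm p) = 0 := by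
    rintro ⟨t, x⟩ ⟨h1, h2⟩
    have : 1 < t := by
      by_contra h
      push Not at h
      exact h2 ⟨⟨le_of_lt h1.1, h⟩, ⟨h1.2.1.le, h1.2.2.le⟩⟩
    have : G (Complex.polarCoord.symm (t, x)) = 0 := by
      apply h0
      rw [hsymm]
      simp only [norm_circleMap_zero]
      rw [abs_of_pos (by linarith)]; exact this.le
    simp only [this, smul_zero]
  have hint : IntegrableOn (fun p : ℝ × ℝ => p.1 • G (Complex.polarCoord.symm p))
      (Ioi 0 ×ˢ Ioo (-π) π) (volume.prod volume) := by
    have h1 : IntegrableOn (fun p : ℝ × ℝ => p.1 • G (Complex.polarCoord.symm p))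
      (Icc 0 1 ×ˢ Icc (-π) π) (volume.prod volume) :=
      hcont.continuousOn.integrableOn_compact (isCompact_Icc.prod isCompact_Icc)
    exact h1.of_forall_sdiff_eq_zero (measurableSet_Ioi.prod measurableSet_Ioo) hz
  change ∫ p in Ioi 0 ×ˢ Ioo (-π) π, _ = _
  rw [Measure.volume_eq_prod, setIntegral_prod _ hint]
  have inner : ∀ t : ℝ, ∫ y in Ioo (-π) π, (t, y).1 • G (Complex.polarCoord.symm (t,y))
      = t * (2 * π * Real.circleAverage G 0 t) := by
    intro t
    simp_rw [hsymm]
    simp only [smul_eq_mul]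
    rw [integral_const_mul, Real.circleAverage_eq_integral_add (-π)]
    congr 1
    rw [intervalIntegral.integral_comp_add_right (fun x => G (circleMap 0 t x)),
      ← integral_Ioc_eq_integral_Ioo, ← intervalIntegral.integral_of_le (by linarith [Real.pi_pos])]
    rw [smul_eq_mul, ← mul_assoc, mul_inv_cancel₀ (by positivity), one_mul]
    congr 1 <;> ring
  simp_rw [inner]
  rw [intervalIntegral.integral_of_le zero_le_one]
  apply setIntegral_eq_of_subset_of_forall_sdiff_eq_zero measurableSet_Ioi
    (fun t ht => ht.1)
  rintro t ⟨ht, ht'⟩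
  have h1 : 1 < t := by
    by_contra h
    push Not at h
    exact ht' ⟨ht, h⟩
  have : Real.circleAverage G 0 t = Real.circleAverage (fun _ => (0:ℝ)) 0 t := by
    apply Real.circleAverage_congr_sphere
    intro z hz
    apply h0
    rw [mem_sphere_zero_iff_norm, abs_of_pos (by linarith)] at hz
    rw [hz]; exact h1.le
  rw [this, Real.circleAverage_const]; simp

lemma k_int {k : ℝ → ℝ} (hk : Continuous k) {a b : ℝ} (ha : 0 ≤ a) (hab : a < b) (hb : b < 1)
    (hka : ∀ x, x ≤ a → k x = 0) (hkb : ∀ x, b ≤ x → k x = 0) (h1 : ∫ x in a..b, k x = 1) :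
    ∫ t in (0:ℝ)..1, k (t ^ 2) * (2 * t) = 1 := by
  have := intervalIntegral.integral_comp_mul_deriv (a := 0) (b := 1) (f := fun t : ℝ => t ^ 2)
    (f' := fun t => 2 * t) (g := k) (fun x _ => by simpa using hasDerivAt_pow 2 x)
    (by fun_prop) hk
  simp only [Function.comp] at this
  rw [this]
  have e : ∀ x y : ℝ, IntervalIntegrable k volume x y := fun x y => hk.intervalIntegrable x y
  rw [← intervalIntegral.integral_add_adjacent_intervals (e _ a) (e a _),
    ← intervalIntegral.integral_add_adjacent_intervals (e a b) (e b _), h1]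
  rw [intervalIntegral.integral_congr (g := fun _ => 0), intervalIntegral.integral_congr (a := b) (g := fun _ => 0)]
  · simp
  · intro x hx
    rw [uIcc_of_le (by norm_num; linarith)] at hx
    exact hkb x hx.1
  · intro x hx
    rw [uIcc_of_le (by norm_num; linarith)] at hx
    exact hka x hx.2

lemma circ_cont {V : ℂ → ℝ} (hV : ContinuousOn V (ball 0 1)) {k : ℝ → ℝ} (hk : Continuous k)
    {b : ℝ} (hb : b < 1) (hkb : ∀ x, b ≤ x → k x = 0) :
    Continuous ((ball (0:ℂ) 1).indicator fun z => V z * (4 * k (‖z‖ ^ 2))) := by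
  rw [continuous_iff_continuousAt]
  intro z
  by_cases hz : ‖z‖ < 1
  · have hn : ball (0:ℂ) 1 ∈ 𝓝 z := isOpen_ball.mem_nhds (by simpa using hz)
    have h1 : ContinuousAt (fun z => V z * (4 * k (‖z‖ ^ 2))) z :=
      (hV.continuousAt hn).mul (by fun_prop)
    apply h1.congr
    filter_upwards [hn] with w hw
    rw [indicator_of_mem hw]
  · have : ∀ᶠ w in 𝓝 z, b < ‖w‖ ^ 2 := by
      have hc : Continuous fun w : ℂ => ‖w‖ ^ 2 := by fun_prop
      apply hc.continuousAt.eventually (lt_mem_nhds _)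
      push Not at hz
      nlinarith
    apply (continuousAt_const (y := (0:ℝ))).congr
    filter_upwards [this] with w hw
    by_cases h : w ∈ ball (0:ℂ) 1
    · rw [indicator_of_mem h, hkb _ hw.le]; simp
    · rw [indicator_of_notMem h]

lemma avg_bound {V : ℂ → ℝ} (hV : ContinuousOn V (ball 0 1)) {k : ℝ → ℝ} (hk : Continuous k)
    (hk0 : ∀ x, 0 ≤ k x)
    {a b : ℝ} (ha : 0 ≤ a) (hab : a < b) (hb : b < 1)
    (hka : ∀ x, x ≤ a → k x = 0) (hkb : ∀ x, b ≤ x → k x = 0) (h1 : ∫ x in a..b, k x = 1)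
    {C : ℝ} (hC : ∫ z in ball (0:ℂ) 1, V z * (4 * k (‖z‖ ^ 2)) ≤ C) :
    ∃ t, 0 < t ∧ t < 1 ∧ a < t ^ 2 ∧ Real.circleAverage V 0 t ≤ C / (4 * π) := by
  by_contra hcon
  push Not at hcon
  have hc := circ_cont hV hk hb hkb
  set G := ((ball (0:ℂ) 1).indicator fun z => V z * (4 * k (‖z‖ ^ 2))) with hG
  have e1 : ∫ z in ball (0:ℂ) 1, V z * (4 * k (‖z‖ ^ 2)) = ∫ z, G z :=
    (integral_indicator measurableSet_ball).symm
  rw [e1, polar_int hc (fun z hz => indicator_of_notMem (by simpa using hz) _)] at hC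
  set L := C / (4 * π) with hL
  have key : ∀ t ∈ Icc (0:ℝ) 1, t * (2 * π * Real.circleAverage G 0 t) =
      (4 * π * Real.circleAverage V 0 t) * (k (t ^ 2) * (2 * t)) := by
    intro t ht
    rcases eq_or_lt_of_le ht.2 with h | h
    · subst h
      have : Real.circleAverage G 0 1 = Real.circleAverage (fun _ => (0:ℝ)) 0 1 := by
        apply Real.circleAverage_congr_sphere
        intro z hz
        exact indicator_of_notMem (by simp at hz; simp [hz]) _
      rw [this, Real.circleAverage_const, hkb _ (by norm_num; exact hb.le)]; simp
    · have : Real.circleAverage G 0 t = Real.circleAverage (fun z => (4 * k (t^2)) • V z) 0 t := by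
        apply Real.circleAverage_congr_sphere
        intro z hz
        rw [mem_sphere_zero_iff_norm, abs_of_nonneg ht.1] at hz
        rw [hG, indicator_of_mem (by simpa [hz] using h), hz]
        simp [mul_comm]
      rw [this, Real.circleAverage_fun_smul, smul_eq_mul]; ring
  have hci : Continuous fun t => t * (2 * π * Real.circleAverage G 0 t) := by
    have := Real.Continuous.circleAverage (c := 0) hc
    fun_prop
  have hlt : ∫ t in (0:ℝ)..1, (4 * π * L) * (k (t ^ 2) * (2 * t)) <
      ∫ t in (0:ℝ)..1, t * (2 * π * Real.circleAverage G 0 t) := by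
    have hle : ∀ t ∈ Ioc (0:ℝ) 1, (4 * π * L) * (k (t ^ 2) * (2 * t)) ≤ t * (2 * π * Real.circleAverage G 0 t) := by
      intro t ht
      rw [key t ⟨ht.1.le, ht.2⟩]
      by_cases h : a < t ^ 2
      · rcases eq_or_lt_of_le ht.2 with h' | h'
        · subst h'; rw [hkb _ (by norm_num; exact hb.le)]; simp
        · have := hcon t ht.1 h' h
          have := hk0 (t^2)
          have := ht.1
          gcongr
      · rw [hka _ (not_lt.1 h)]; simp
    have hex : ∃ t ∈ Icc (0:ℝ) 1, k (t ^ 2) * (2 * t) ≠ 0 := by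
      by_contra hno
      push Not at hno
      have := k_int hk ha hab hb hka hkb h1
      rw [intervalIntegral.integral_congr (g := fun _ => 0)] at this
      · simp at this
      · intro x hx
        rw [uIcc_of_le (by norm_num)] at hx
        exact hno x hx
    obtain ⟨t, ht, hkt⟩ := hex
    apply intervalIntegral.integral_lt_integral_of_continuousOn_of_le_of_exists_lt zero_lt_one
      (by fun_prop) hci.continuousOn hle
    refine ⟨t, ht, ?_⟩
    rw [key t ht]
    have ht0 : t ≠ 0 := by rintro rfl; simp at hkt
    have htp : 0 < t := lt_of_le_of_ne ht.1 (Ne.symm ht0)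
    have hk' : k (t^2) ≠ 0 := by intro h; simp [h] at hkt
    have hkp : 0 < k (t^2) := lt_of_le_of_ne (hk0 _) (Ne.symm hk')
    have hta : a < t ^ 2 := by
      by_contra h; exact hk' (hka _ (not_lt.1 h))
    have ht1 : t < 1 := by
      rcases eq_or_lt_of_le ht.2 with h' | h'
      · subst h'; exact absurd (hkb _ (by norm_num; exact hb.le)) hk'
      · exact h'
    have := hcon t htp ht1 hta
    gcongr
  rw [intervalIntegral.integral_const_mul, k_int hk ha hab hb hka hkb h1, hL] at hlt
  have : 4 * π * (C / (4 * π)) = C := by field_simp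
  linarith

lemma cmap_image {Ω : Set ℂ} {ψ φ : ℂ → ℂ} (cm : CMap Ω ψ φ) : ψ '' ball (0:ℂ) 1 = Ω := by
  ext w
  constructor
  · rintro ⟨z, hz, rfl⟩; exact cm.ψm z hz
  · intro hw; exact ⟨φ w, cm.φm w hw, cm.ψφ w hw⟩

lemma cmap_change {Ω : Set ℂ} {ψ φ : ℂ → ℂ} (cm : CMap Ω ψ φ) (v : ℂ → ℝ) (k : ℝ → ℝ) :
    ∫ z in Ω, v z * (4 * ‖deriv φ z‖ ^ 2 * k (‖φ z‖ ^ 2)) =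
    ∫ z in ball (0:ℂ) 1, v (ψ z) * (4 * k (‖z‖ ^ 2)) := by
  rw [← cmap_image cm]
  have hf' : ∀ x ∈ ball (0:ℂ) 1, HasFDerivWithinAt ψ
      ((ContinuousLinearMap.toSpanSingleton ℂ (deriv ψ x)).restrictScalars ℝ) (ball 0 1) x := by
    intro x hx
    have := (cm.ψd x (ball_subset_closedBall hx)).hasDerivAt.hasFDerivAt.restrictScalars ℝ
    exact this.hasFDerivWithinAt
  have hinj : InjOn ψ (ball 0 1) := by
    intro x hx y hy h
    rw [← cm.φψ x hx, ← cm.φψ y hy, h]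
  rw [integral_image_eq_integral_abs_det_fderiv_smul volume measurableSet_ball hf' hinj]
  apply setIntegral_congr_fun measurableSet_ball
  intro z hz
  have hdet : ((ContinuousLinearMap.toSpanSingleton ℂ (deriv ψ z)).restrictScalars ℝ).det = ‖deriv ψ z‖ ^ 2 := by
    simp [ContinuousLinearMap.det, LinearMap.det_restrictScalars,
      Algebra.norm_complex_eq, Complex.normSq_eq_norm_sq]
  simp only [hdet, smul_eq_mul, cm.φψ z hz]
  rw [abs_of_nonneg (by positivity)]
  have : ‖deriv φ (ψ z)‖ * ‖deriv ψ z‖ = 1 := by rw [← norm_mul, cm.dd z hz, norm_one]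
  have : ‖deriv φ (ψ z)‖^2 * ‖deriv ψ z‖^2 = 1 := by rw [← mul_pow, this, one_pow]
  linear_combination (v (ψ z) * (4 * k (‖z‖^2))) * this

lemma avg_exists {Ω : Set ℂ} (hO : IsOpen Ω) {ψ φ : ℂ → ℂ} (cm : CMap Ω ψ φ)
    {u : ℂ → ℝ} (hu : IsExhaustion u Ω) {T : ℝ≥0∞} {μfam : ℝ → Measure ℂ} (M : MAP Ω u T μfam)
    {c : ℝ} (hc : 0 < c) (hopf : ∀ w ∈ Ω, u w ≤ -c * (1 - ‖φ w‖ ^ 2))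
    {v : ℂ → ℝ} (hv : ContDiffOn ℝ 2 v Ω) (hv0 : ∀ z ∈ Ω, 0 ≤ v z) (hvl : ∀ z ∈ Ω, 0 ≤ lap v z)
    {N : ℝ} (hN : ∀ r < 0, ∫ z, v z ∂(μfam r) ≤ N) :
    ∃ C : ℝ, ∀ s < 1, ∃ t, 0 < t ∧ s < t ∧ t < 1 ∧ Real.circleAverage (fun z => v (ψ z)) 0 t ≤ C := by
  obtain ⟨C, h⟩ := ring_bound hO cm hu M hc hopf hv hv0 hvl hN
  refine ⟨C / (4 * π), fun s hs => ?_⟩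
  set s' := max s (1/2) with hs'
  have h1 : s' < 1 := by rw [hs']; exact max_lt hs (by norm_num)
  have h2 : 1/2 ≤ s' := le_max_right _ _
  have h3 : s ≤ s' := le_max_left _ _
  have h4 : s' ^ 2 < 1 := by nlinarith
  obtain ⟨k, hk, hk0, hka, hkb, hk1, hkC⟩ := h (s'^2) ((s'^2+1)/2) (by nlinarith) (by linarith) (by linarith)
  rw [cmap_change cm] at hkC
  have hV : ContinuousOn (fun z => v (ψ z)) (ball 0 1) :=
    hv.continuousOn.comp (fun z hz => (cm.ψd z (ball_subset_closedBall hz)).continuousAt.continuousWithinAt) cm.ψm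
  obtain ⟨t, ht0, ht1, hta, htC⟩ := avg_bound hV hk hk0 (by positivity) (by linarith) (by linarith) hka hkb hk1 hkC
  exact ⟨t, ht0, by nlinarith, ht1, htC⟩


lemma montel_ultra {K : ℕ → ℂ → ℂ} (hd : ∀ n, DifferentiableOn ℂ (K n) (ball 0 1))
    (hb : ∀ ρ < 1, ∃ B : ℝ, ∀ n, ∀ z ∈ ball (0:ℂ) ρ, ‖K n z‖ ≤ B) :
    ∃ H : ℂ → ℂ, ∃ l : Filter ℕ, l.NeBot ∧ l ≤ atTop ∧ DifferentiableOn ℂ H (ball 0 1) ∧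
      ∀ z ∈ ball (0:ℂ) 1, Tendsto (fun n => K n z) l (𝓝 (H z)) := by
  let l : Ultrafilter ℕ := Ultrafilter.of atTop
  have hl : (l : Filter ℕ) ≤ atTop := Ultrafilter.of_le _
  have hlim : ∀ z : ℂ, ∃ w : ℂ, z ∈ ball (0:ℂ) 1 → Tendsto (fun n => K n z) l (𝓝 w) := by
    intro z
    by_cases hz : z ∈ ball (0:ℂ) 1
    · have hz1 : ‖z‖ < 1 := by simpa using hz
      obtain ⟨B, hB⟩ := hb ((1 + ‖z‖)/2) (by linarith)
      have hmem : ∀ n, K n z ∈ closedBall (0:ℂ) B := by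
        intro n
        simpa using hB n z (by simp; linarith)
      obtain ⟨w, -, hw⟩ := (isCompact_closedBall (0:ℂ) B).ultrafilter_le_nhds (l.map fun n => K n z)
        (by
          rw [Filter.le_principal_iff]
          exact Filter.mem_map.2 (Filter.Eventually.of_forall hmem))
      exact ⟨w, fun _ => hw⟩
    · exact ⟨0, fun h => absurd h hz⟩
  choose H hH using hlim
  refine ⟨H, l, inferInstance, hl, ?_, hH⟩
  refine TendstoLocallyUniformlyOn.differentiableOn (F := K) (φ := (l : Filter ℕ)) ?_
    (Eventually.of_forall hd) isOpen_ball
  rw [Metric.tendstoLocallyUniformlyOn_iff]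
  intro ε hε x hx
  have hx1 : ‖x‖ < 1 := by simpa using hx
  set ρ := (1 + ‖x‖)/2 with hρ
  set d := ρ - ‖x‖ with hdd
  have hd0 : 0 < d := by rw [hdd, hρ]; linarith
  obtain ⟨B, hB⟩ := hb ρ (by linarith)
  have hsub : ball x d ⊆ ball 0 ρ := by
    apply ball_subset_ball'
    rw [dist_zero_right]; linarith
  have hsub1 : ball (0:ℂ) ρ ⊆ ball 0 1 := ball_subset_ball (by linarith)
  have hxd : x ∈ ball x d := mem_ball_self hd0
  have hB0 : 0 ≤ B := le_trans (norm_nonneg _) (hB 0 x (hsub hxd))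
  set A := (2 * B + 1) / d with hA
  have hA0 : 0 < A := by positivity
  have hlip : ∀ n, ∀ y ∈ ball x d, dist (K n y) (K n x) ≤ A * dist y x := by
    intro n y hy
    apply Complex.dist_le_div_mul_dist_of_mapsTo_ball ((hd n).mono (hsub.trans hsub1)) _ hy
    intro z hz
    rw [mem_closedBall, dist_eq_norm]
    have := norm_sub_le (K n z) (K n x)
    have := hB n z (hsub hz)
    have := hB n x (hsub hxd)
    linarith
  have hlipH : ∀ y ∈ ball x d, dist (H y) (H x) ≤ A * dist y x := by
    intro y hy
    exact le_of_tendsto ((hH y (hsub1 (hsub hy))).dist (hH x hx)) (Eventually.of_forall fun n => hlip n y hy)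
  set δ := min d (ε / (3 * A)) with hδ
  have hδ0 : 0 < δ := by rw [hδ]; exact lt_min hd0 (by positivity)
  refine ⟨ball x δ, mem_nhdsWithin_of_mem_nhds (ball_mem_nhds x hδ0), ?_⟩
  have := (Metric.tendsto_nhds.1 (hH x hx)) (ε/3) (by positivity)
  filter_upwards [this] with n hn y hy
  have hyd : y ∈ ball x d := ball_subset_ball (min_le_left _ _) hy
  have h1 := hlip n y hyd
  have h2 := hlipH y hyd
  have h3 : A * dist y x < ε / 3 := by
    have : dist y x < ε / (3 * A) := lt_of_lt_of_le hy (min_le_right _ _)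
    calc A * dist y x < A * (ε / (3 * A)) := by gcongr
      _ = ε / 3 := by field_simp
  have t1 := dist_triangle (H y) (H x) (K n y)
  have t2 := dist_triangle (H x) (K n x) (K n y)
  rw [dist_comm (H x) (K n x), dist_comm (K n x) (K n y)] at t2
  linarith

lemma herglotz_one {F : ℂ → ℂ} (hF : DifferentiableOn ℂ F (ball 0 1)) {t : ℝ} (ht0 : 0 < t)
    (ht1 : t < 1) {C : ℝ} (hC : Real.circleAverage (fun z => ‖F z‖) 0 t ≤ C) :
    ∃ K : ℂ → ℂ, DifferentiableOn ℂ K (ball 0 1) ∧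
      (∀ z ∈ ball (0:ℂ) 1, ‖K z‖ ≤ (1 + ‖z‖)/(1 - ‖z‖) * C) ∧
      (∀ z ∈ ball (0:ℂ) 1, ‖F (t * z)‖ ≤ (K z).re) := by
  have hsub : closedBall (0:ℂ) t ⊆ ball 0 1 := closedBall_subset_ball ht1
  have hFc : ContinuousOn F (sphere 0 |t|) := by
    rw [abs_of_pos ht0]
    exact hF.continuousOn.mono (sphere_subset_closedBall.trans hsub)
  have hci : CircleIntegrable (fun z => ‖F z‖) 0 t := hFc.norm.circleIntegrable'
  have hcic : CircleIntegrable (fun z => ((‖F z‖ : ℝ) : ℂ)) 0 t :=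
    (Complex.continuous_ofReal.comp_continuousOn hFc.norm).circleIntegrable'
  set H : ℂ → ℂ := fun w => Real.circleAverage (fun ζ ↦ herglotzRieszKernel 0 w ζ • ((‖F ζ‖ : ℝ) : ℂ)) 0 t with hH
  have hHd : DifferentiableOn ℂ H (ball 0 t) := differentiableOn_circleAverage_herglotzRieszKernel_smul hcic
  have hmap : ∀ z ∈ ball (0:ℂ) 1, (t:ℂ) * z ∈ ball (0:ℂ) t := by
    intro z hz
    have : ‖z‖ < 1 := by simpa using hz
    simp [abs_of_pos ht0]
    nlinarith
  refine ⟨fun z => H (t * z), hHd.comp (by fun_prop) hmap, ?_, ?_⟩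
  · intro z hz
    have hz1 : ‖z‖ < 1 := by simpa using hz
    have hw := hmap z hz
    simp only [hH, Real.circleAverage_def]
    rw [norm_smul, Real.norm_of_nonneg (by positivity)]
    have hb : ‖∫ θ in (0:ℝ)..2*π, herglotzRieszKernel 0 (t*z) (circleMap 0 t θ) • ((‖F (circleMap 0 t θ)‖ : ℝ) : ℂ)‖
        ≤ ∫ θ in (0:ℝ)..2*π, (1 + ‖z‖)/(1 - ‖z‖) * ‖F (circleMap 0 t θ)‖ := by
      apply intervalIntegral.norm_integral_le_of_norm_le (by positivity)
      · refine Eventually.of_forall fun θ _ => ?_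
        rw [norm_smul, Complex.norm_real, norm_norm]
        gcongr
        rw [herglotzRieszKernel_def, norm_div]
        simp only [sub_zero]
        have hn : ‖circleMap 0 t θ‖ = t := by simp [abs_of_pos ht0]
        have htz : ‖(t:ℂ) * z‖ = t * ‖z‖ := by simp [abs_of_pos ht0]
        have h1 : ‖circleMap 0 t θ + t * z‖ ≤ t * (1 + ‖z‖) := by
          refine (norm_add_le _ _).trans ?_
          rw [hn, htz]; linarith
        have h2 : t * (1 - ‖z‖) ≤ ‖circleMap 0 t θ - t * z‖ := by
          refine le_trans ?_ (norm_sub_norm_le _ _)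
          rw [hn, htz]; linarith
        have h3 : 0 < 1 - ‖z‖ := by linarith
        calc _ ≤ (t * (1 + ‖z‖)) / (t * (1 - ‖z‖)) := by gcongr
          _ = _ := by field_simp
      · exact (hci.const_mul _ :)
    rw [intervalIntegral.integral_const_mul] at hb
    rw [Real.circleAverage_def, smul_eq_mul] at hC
    have h3 : 0 < 1 - ‖z‖ := by linarith
    calc _ ≤ (2*π)⁻¹ * ((1 + ‖z‖)/(1 - ‖z‖) * ∫ θ in (0:ℝ)..2*π, ‖F (circleMap 0 t θ)‖) := by gcongr
      _ = (1 + ‖z‖)/(1 - ‖z‖) * ((2*π)⁻¹ * ∫ θ in (0:ℝ)..2*π, ‖F (circleMap 0 t θ)‖) := by ring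
      _ ≤ _ := by gcongr
  · intro z hz
    have hw := hmap z hz
    simp only [hH]
    rw [re_circleAverage_herglotzRieszKernel_smul hci hw]
    have hdc : DiffContOnCl ℂ F (ball 0 t) :=
      (hF.mono (closure_ball_subset_closedBall.trans hsub)).diffContOnCl
    rw [← hdc.circleAverage_re_herglotzRieszKernel_smul hw]
    simp only [Real.circleAverage_def]
    rw [norm_smul, Real.norm_of_nonneg (by positivity), smul_eq_mul]
    gcongr
    refine (intervalIntegral.norm_integral_le_integral_norm (by positivity)).trans (le_of_eq ?_)
    apply intervalIntegral.integral_congr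
    intro θ _
    have hs : circleMap 0 t θ ∈ sphere (0:ℂ) t := circleMap_mem_sphere _ ht0.le _
    have hpos := le_re_herglotzRieszKernel hs hw
    have : 0 ≤ (herglotzRieszKernel 0 (t*z) (circleMap 0 t θ)).re := by
      refine le_trans ?_ hpos
      have hw' : ‖(t:ℂ) * z‖ < t := by simpa using hw
      apply div_nonneg
      · rw [sub_zero]; linarith
      · positivity
    simp only [Pi.smul_apply', Function.comp, norm_smul, smul_eq_mul]
    rw [Real.norm_of_nonneg this]

lemma herglotz_major {F : ℂ → ℂ} (hF : DifferentiableOn ℂ F (ball 0 1)) {C : ℝ}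
    (hC : ∀ s < 1, ∃ t, 0 < t ∧ s < t ∧ t < 1 ∧ Real.circleAverage (fun z => ‖F z‖) 0 t ≤ C) :
    ∃ H : ℂ → ℂ, DifferentiableOn ℂ H (ball 0 1) ∧ ∀ z ∈ ball (0:ℂ) 1, ‖F z‖ ≤ (H z).re := by
  have h1 : ∀ n : ℕ, ∃ t : ℝ, ∃ K : ℂ → ℂ, 1 - 1/((n:ℝ)+1) < t ∧ t < 1 ∧ DifferentiableOn ℂ K (ball 0 1) ∧
      (∀ z ∈ ball (0:ℂ) 1, ‖K z‖ ≤ (1 + ‖z‖)/(1 - ‖z‖) * C) ∧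
      (∀ z ∈ ball (0:ℂ) 1, ‖F (t * z)‖ ≤ (K z).re) := by
    intro n
    obtain ⟨t, ht0, hs, ht1, hc⟩ := hC (1 - 1/((n:ℝ)+1)) (by
      have : 0 < 1/((n:ℝ)+1) := by positivity
      linarith)
    obtain ⟨K, a, b, c⟩ := herglotz_one hF ht0 ht1 hc
    exact ⟨t, K, hs, ht1, a, b, c⟩
  choose t K ht ht1 hK hKb hKF using h1
  have hC0 : 0 ≤ C := by
    have := hKb 0 0 (by simp)
    simp at this
    exact le_trans (norm_nonneg _) this
  obtain ⟨H, l, hl, hle, hHd, hHl⟩ := montel_ultra hK (by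
    intro ρ hρ
    refine ⟨(1 + ρ)/(1 - ρ) * C, fun n z hz => (hKb n z (ball_subset_ball hρ.le hz)).trans ?_⟩
    have hz' : ‖z‖ < ρ := by simpa using hz
    have : 0 < 1 - ρ := by linarith
    have : 0 ≤ 1 + ρ := by linarith [norm_nonneg z]
    gcongr)
  refine ⟨H, hHd, fun z hz => ?_⟩
  have htt : Tendsto t atTop (𝓝 1) := by
    refine tendsto_of_tendsto_of_tendsto_of_le_of_le (g := fun n : ℕ => 1 - 1/((n:ℝ)+1)) ?_ tendsto_const_nhds
      (fun n => (ht n).le) (fun n => (ht1 n).le)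
    simpa using (tendsto_const_nhds (x := (1:ℝ))).sub tendsto_one_div_add_atTop_nhds_zero_nat
  have e1 : Tendsto (fun n => ‖F (t n * z)‖) l (𝓝 ‖F z‖) := by
    have hc : ContinuousAt F z := (hF.continuousOn.continuousAt (isOpen_ball.mem_nhds hz))
    have : Tendsto (fun n => (t n : ℂ) * z) l (𝓝 z) := by
      have := ((Complex.continuous_ofReal.tendsto 1).comp (htt.mono_left hle)).mul_const z
      simpa using this
    exact (hc.tendsto.comp this).norm
  have e2 : Tendsto (fun n => (K n z).re) l (𝓝 (H z).re) :=
    (Complex.continuous_re.tendsto _).comp (hHl z hz)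
  exact le_of_tendsto_of_tendsto e1 e2 (Eventually.of_forall fun n => hKF n z hz)

lemma major_exists {Ω : Set ℂ} (hO : IsOpen Ω) (hbd : Bornology.IsBounded Ω) {ψ φ : ℂ → ℂ} (cm : CMap Ω ψ φ)
    {u : ℂ → ℝ} (hu : IsExhaustion u Ω) {T : ℝ≥0∞} {μfam : ℝ → Measure ℂ} (M : MAP Ω u T μfam)
    {f : ℂ → ℂ} (hf : DifferentiableOn ℂ f Ω) {p : ℝ} (hp : 1 ≤ p)
    {N : ℝ} (hN : ∀ r < 0, ∫ z, ‖f z‖ ^ p ∂(μfam r) ≤ N) :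
    ∃ H : ℂ → ℂ, DifferentiableOn ℂ H Ω ∧ ∀ z ∈ Ω, ‖f z‖ ≤ (H z).re := by
  obtain ⟨c, hc, hop⟩ := hopf hO hbd cm hu
  obtain ⟨v1, v2, v3⟩ := vpow_facts hO hf (q := 1/2) (δ := 1) (by norm_num) one_pos
  set v : ℂ → ℝ := fun z => (‖f z‖ ^ 2 + 1) ^ (1/2 : ℝ) with hv
  have hvf : ∀ z, ‖f z‖ ≤ v z := by
    intro z
    simp only [hv]
    rw [← Real.sqrt_eq_rpow]
    apply Real.le_sqrt_of_sq_le; linarith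
  have hvle : ∀ z, v z ≤ 2 + ‖f z‖ ^ p := by
    intro z
    have h1 : v z ≤ 1 + ‖f z‖ := by
      simp only [hv]
      rw [← Real.sqrt_eq_rpow, Real.sqrt_le_left (by positivity)]
      nlinarith [norm_nonneg (f z)]
    have h2 : ‖f z‖ ≤ 1 + ‖f z‖ ^ p := by
      rcases le_total ‖f z‖ 1 with h | h
      · have : 0 ≤ ‖f z‖ ^ p := by positivity
        linarith
      · have := Real.rpow_le_rpow_of_exponent_le h hp
        rw [Real.rpow_one] at this
        linarith
    linarith
  have hNv : ∀ r < 0, ∫ z, v z ∂(μfam r) ≤ 2 * T.toReal + N := by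
    intro r hr
    have hfp : Integrable (fun z => ‖f z‖ ^ p) (μfam r) :=
      M.integrable hu (hf.continuousOn.norm.rpow_const (fun _ _ => Or.inr (by linarith))) hr
    have : IsFiniteMeasure (μfam r) := ⟨(M.fin r hr).trans_lt M.hT⟩
    calc ∫ z, v z ∂(μfam r) ≤ ∫ z, (2 + ‖f z‖ ^ p) ∂(μfam r) :=
          integral_mono (M.integrable hu v1.continuousOn hr) ((integrable_const _).add hfp) hvle
      _ = 2 * (μfam r).real univ + ∫ z, ‖f z‖ ^ p ∂(μfam r) := by
          rw [integral_add (integrable_const _) hfp, integral_const]; simp [mul_comm]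
      _ ≤ _ := by
          have := hN r hr
          have h2 : (μfam r).real univ ≤ T.toReal := ENNReal.toReal_mono M.hT.ne (M.fin r hr)
          linarith
  obtain ⟨C, hC⟩ := avg_exists hO cm hu M hc hop v1 v2 v3 hNv
  have hψd : DifferentiableOn ℂ ψ (ball 0 1) := fun z hz =>
    (cm.ψd z (ball_subset_closedBall hz)).differentiableWithinAt
  have hF : DifferentiableOn ℂ (fun z => f (ψ z)) (ball 0 1) := hf.comp hψd cm.ψm
  obtain ⟨H, hHd, hHF⟩ := herglotz_major hF (C := C) (by
    intro s hs
    obtain ⟨t, h1, h2, h3, h4⟩ := hC s hs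
    refine ⟨t, h1, h2, h3, le_trans ?_ h4⟩
    have hsp : sphere (0:ℂ) |t| ⊆ ball 0 1 := by
      rw [abs_of_pos h1]; exact sphere_subset_closedBall.trans (closedBall_subset_ball h3)
    apply Real.circleAverage_mono
    · exact (hF.continuousOn.mono hsp).norm.circleIntegrable'
    · apply ContinuousOn.circleIntegrable'
      exact (v1.continuousOn.comp hψd.continuousOn cm.ψm).mono hsp
    · intro x _
      exact hvf _)
  refine ⟨fun w => H (φ w), hHd.comp cm.φd cm.φm, fun z hz => ?_⟩
  have := hHF (φ z) (cm.φm z hz)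
  rwa [cm.ψφ z hz] at this


lemma pow_interp {p : ℝ} (hp : 0 < p) {B : ℝ} (hB : 0 ≤ B) {a : ℝ} (ha : 0 < a) :
    ∃ K : ℝ, 0 ≤ K ∧ ∀ y, 0 ≤ y → y ≤ B → y ^ p ≤ a + K * y ^ 2 := by
  set s := a ^ (1/p) with hs
  have hs0 : 0 < s := by positivity
  refine ⟨B ^ p / s ^ 2, by positivity, fun y hy0 hyB => ?_⟩
  rcases le_total y s with h | h
  · have : y ^ p ≤ a := by
      calc y ^ p ≤ s ^ p := by gcongr
        _ = a := by rw [hs, ← Real.rpow_mul ha.le, one_div_mul_cancel hp.ne', Real.rpow_one]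
    have : 0 ≤ B ^ p / s ^ 2 * y ^ 2 := by positivity
    linarith
  · have h1 : y ^ p ≤ B ^ p := by gcongr
    have h2 : B ^ p ≤ B ^ p / s ^ 2 * y ^ 2 := by
      rw [div_mul_eq_mul_div, le_div_iff₀ (by positivity)]
      gcongr
    linarith

lemma theta_facts {h : ℂ} (hh : 0 ≤ h.re) {n : ℝ} (hn : 0 < n) {p : ℝ} (hp : 1 ≤ p) :
    ‖(n:ℂ) / (n + h)‖ ≤ 1 ∧ ‖1 - (n:ℂ) / (n + h)‖ ≤ 1 ∧
    ‖1 - (n:ℂ) / (n + h)‖ ^ 2 ≤ 2 * (1 - ‖(n:ℂ) / (n + h)‖ ^ p) := by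
  have hre : 0 < ((n:ℂ) + h).re := by simp; linarith
  have hne : (n:ℂ) + h ≠ 0 := by intro h0; rw [h0] at hre; simp at hre
  have hN : 0 < ‖(n:ℂ) + h‖ := norm_pos_iff.2 hne
  have e1 : 1 - (n:ℂ) / (n + h) = h / (n + h) := by field_simp; ring
  have key : ‖h‖ ^ 2 + n ^ 2 ≤ ‖(n:ℂ) + h‖ ^ 2 := by
    rw [← Complex.normSq_eq_norm_sq, ← Complex.normSq_eq_norm_sq, Complex.normSq_apply, Complex.normSq_apply]
    simp
    nlinarith
  have hsq : ‖1 - (n:ℂ) / (n + h)‖ ^ 2 ≤ 1 - ‖(n:ℂ) / (n + h)‖ ^ 2 := by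
    rw [e1, norm_div, norm_div, Complex.norm_real, Real.norm_of_nonneg hn.le, div_pow, div_pow]
    rw [le_sub_iff_add_le, ← add_div, div_le_one (by positivity)]
    exact key
  have hx0 := norm_nonneg ((n:ℂ) / (n + h))
  have hy0 := norm_nonneg (1 - (n:ℂ) / (n + h))
  have hx1 : ‖(n:ℂ) / (n + h)‖ ≤ 1 := by nlinarith
  refine ⟨hx1, by nlinarith, ?_⟩
  have : ‖(n:ℂ) / (n + h)‖ ^ p ≤ ‖(n:ℂ) / (n + h)‖ := by
    have := Real.rpow_le_rpow_of_exponent_ge' hx0 hx1 zero_le_one hp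
    rwa [Real.rpow_one] at this
  nlinarith

lemma step1 {Ω : Set ℂ} (hO : IsOpen Ω)
    {u : ℂ → ℝ} (hu : IsExhaustion u Ω) {T : ℝ≥0∞} {μfam : ℝ → Measure ℂ} (M : MAP Ω u T μfam)
    {f : ℂ → ℂ} (hf : DifferentiableOn ℂ f Ω) {p : ℝ} (hp : 1 ≤ p)
    {N : ℝ} (hN : ∀ r < 0, ∫ z, ‖f z‖ ^ p ∂(μfam r) ≤ N)
    {H : ℂ → ℂ} (hH : DifferentiableOn ℂ H Ω) (hfH : ∀ z ∈ Ω, ‖f z‖ ≤ (H z).re)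
    {η : ℝ} (hη : 0 < η) :
    ∃ g : ℂ → ℂ, DifferentiableOn ℂ g Ω ∧ (∃ B : ℝ, 0 ≤ B ∧ ∀ z ∈ Ω, ‖g z‖ ≤ B) ∧ ∃ r0 < 0, ∀ r, r0 ≤ r → r < 0 →
      ∫ z, ‖f z - g z‖ ^ p ∂(μfam r) ≤ η := by
  have hp0 : 0 < p := by linarith
  have hN0 : 0 ≤ N := le_trans (integral_nonneg fun z => by positivity) (hN (-1) (by norm_num))
  set a := η / (2 * (N + 1)) with ha
  have ha0 : 0 < a := by positivity
  obtain ⟨K, hK0, hK⟩ := pow_interp hp0 (B := 1) zero_le_one ha0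
  set δ := η / (8 * (K + 1)) with hδ
  have hδ0 : 0 < δ := by positivity
  set I : ℝ → ℝ := fun r => ∫ z, ‖f z‖ ^ p ∂(μfam r) with hI
  have hbdd : BddAbove (I '' Iio 0) := ⟨N, by rintro _ ⟨r, hr, rfl⟩; exact hN r hr⟩
  have hne : (I '' Iio 0).Nonempty := ⟨_, -1, by simp, rfl⟩
  obtain ⟨_, ⟨r0, hr0, rfl⟩, hlt⟩ := exists_lt_of_lt_csSup hne (show sSup (I '' Iio 0) - δ < _ by linarith)
  have hr0' : r0 < 0 := hr0
  set S := sSup (I '' Iio 0) with hS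
  have hSN : S ≤ N := csSup_le hne (by rintro _ ⟨r, hr, rfl⟩; exact hN r hr)
  have hIS : ∀ r < 0, I r ≤ S := fun r hr => le_csSup hbdd ⟨r, hr, rfl⟩
  set g : ℕ → ℂ → ℂ := fun n z => f z * (((n+1:ℝ):ℂ) / (((n+1:ℝ):ℂ) + H z)) with hg
  have hHre : ∀ z ∈ Ω, 0 ≤ (H z).re := fun z hz => (norm_nonneg _).trans (hfH z hz)
  have hn0 : ∀ n : ℕ, (0:ℝ) < n + 1 := fun n => by positivity
  have hden : ∀ n : ℕ, ∀ z ∈ Ω, ((n+1:ℝ):ℂ) + H z ≠ 0 := by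
    intro n z hz h0
    have : (((n+1:ℝ):ℂ) + H z).re = 0 := by rw [h0]; simp
    rw [Complex.add_re, Complex.ofReal_re] at this
    linarith [hHre z hz, hn0 n]
  have hgd : ∀ n, DifferentiableOn ℂ (g n) Ω := fun n =>
    hf.mul ((differentiableOn_const _).div ((differentiableOn_const _).add hH) (hden n))
  have hcf : ContinuousOn (fun z => ‖f z‖ ^ p) Ω := hf.continuousOn.norm.rpow_const fun _ _ => Or.inr hp0.le
  have hcg : ∀ n, ContinuousOn (fun z => ‖g n z‖ ^ p) Ω := fun n =>
    (hgd n).continuousOn.norm.rpow_const fun _ _ => Or.inr hp0.le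
  have hcfg : ∀ n, ContinuousOn (fun z => ‖f z - g n z‖ ^ p) Ω := fun n =>
    (hf.continuousOn.sub (hgd n).continuousOn).norm.rpow_const fun _ _ => Or.inr hp0.le
  have hgf : ∀ n, ∀ z ∈ Ω, ‖g n z‖ ≤ ‖f z‖ := by
    intro n z hz
    have := (theta_facts (hHre z hz) (hn0 n) hp).1
    simp only [hg, norm_mul]
    exact mul_le_of_le_one_right (norm_nonneg _) this
  have hgb : ∀ n : ℕ, ∀ z ∈ Ω, ‖g n z‖ ≤ n + 1 := by
    intro n z hz
    have h1 : ‖f z‖ ≤ ‖((n+1:ℝ):ℂ) + H z‖ := by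
      refine (hfH z hz).trans (le_trans ?_ (Complex.re_le_norm _))
      rw [Complex.add_re, Complex.ofReal_re]
      linarith [hn0 n]
    simp only [hg, norm_mul, norm_div]
    rw [Complex.norm_real, Real.norm_of_nonneg (hn0 n).le, ← mul_div_assoc,
      div_le_iff₀ (norm_pos_iff.2 (hden n z hz)), mul_comm]
    have := hn0 n
    gcongr
  have hpt : ∀ n, ∀ z ∈ Ω, ‖f z - g n z‖ ^ p ≤ a * ‖f z‖ ^ p + 2 * K * (‖f z‖ ^ p - ‖g n z‖ ^ p) := by
    intro n z hz
    obtain ⟨h1, h2, h3⟩ := theta_facts (hHre z hz) (hn0 n) hp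
    have h4 := hK _ (norm_nonneg _) h2
    have e1 : f z - g n z = f z * (1 - (((n+1:ℝ):ℂ) / (((n+1:ℝ):ℂ) + H z))) := by simp only [hg]; ring
    rw [e1]
    simp only [hg, norm_mul]
    rw [Real.mul_rpow (norm_nonneg _) (norm_nonneg _), Real.mul_rpow (norm_nonneg _) (norm_nonneg _)]
    have h5 : 0 ≤ ‖f z‖ ^ p := by positivity
    have h6 := h4.trans (add_le_add_right (mul_le_mul_of_nonneg_left h3 hK0) a)
    have h7 := mul_le_mul_of_nonneg_left h6 h5
    refine h7.trans (le_of_eq ?_)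
    ring
  have htend : Tendsto (fun n => ∫ z, ‖g n z‖ ^ p ∂(μfam r0)) atTop (𝓝 (I r0)) := by
    apply tendsto_integral_of_dominated_convergence (fun z => ‖f z‖ ^ p)
    · intro n; exact (M.integrable hu (hcg n) hr0).aestronglyMeasurable
    · exact M.integrable hu hcf hr0
    · intro n
      filter_upwards [M.ae_mem hr0] with z hz
      rw [Real.norm_of_nonneg (by positivity)]
      exact Real.rpow_le_rpow (norm_nonneg _) (hgf n z hz.1) hp0.le
    · filter_upwards [M.ae_mem hr0] with z hz
      have : Tendsto (fun n : ℕ => g n z) atTop (𝓝 (f z)) := by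
        have h1 : Tendsto (fun n : ℕ => ((((n:ℝ)+1)⁻¹ : ℝ) : ℂ)) atTop (𝓝 0) := by
          have := (Complex.continuous_ofReal.tendsto 0).comp tendsto_one_div_add_atTop_nhds_zero_nat
          simpa [Function.comp_def] using this
        have h2 : Tendsto (fun n : ℕ => f z * (1 / (1 + ((((n:ℝ)+1)⁻¹ : ℝ) : ℂ) * H z))) atTop (𝓝 (f z * (1 / (1 + 0 * H z)))) := by
          apply Tendsto.const_mul
          apply Tendsto.div tendsto_const_nhds
          · exact tendsto_const_nhds.add (h1.mul_const _)
          · simp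
        simp only [zero_mul, add_zero, div_one, mul_one] at h2
        refine h2.congr fun n => ?_
        simp only [hg]
        congr 1
        have h3 : ((n+1:ℝ):ℂ) ≠ 0 := by exact_mod_cast (hn0 n).ne'
        have h4 := hden n z hz.1
        rw [Complex.ofReal_inv]
        rw [div_eq_div_iff _ h4]
        · field_simp
        · intro h5; apply h4
          field_simp at h5
          rwa [mul_zero] at h5
      exact (this.norm.rpow_const (Or.inr hp0.le))
  obtain ⟨n, hn⟩ := (htend.eventually (lt_mem_nhds (show I r0 - δ < I r0 by linarith))).exists
  refine ⟨g n, hgd n, ⟨n+1, by positivity, hgb n⟩, r0, hr0, fun r hrr hr => ?_⟩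
  have hif := M.integrable hu hcf hr
  have hig := M.integrable hu (hcg n) hr
  have hmono : ∫ z, ‖g n z‖ ^ p ∂(μfam r0) ≤ ∫ z, ‖g n z‖ ^ p ∂(μfam r) :=
    MAP.mono_pow hO M hu (hgd n) hp0 hrr hr
  have hsub : Integrable (fun z => 2 * K * (‖f z‖ ^ p - ‖g n z‖ ^ p)) (μfam r) := (hif.sub hig).const_mul _
  calc ∫ z, ‖f z - g n z‖ ^ p ∂(μfam r)
      ≤ ∫ z, (a * ‖f z‖ ^ p + 2 * K * (‖f z‖ ^ p - ‖g n z‖ ^ p)) ∂(μfam r) := by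
        apply integral_mono_ae (M.integrable hu (hcfg n) hr)
          ((hif.const_mul _).add ((hif.sub hig).const_mul _))
        filter_upwards [M.ae_mem hr] with z hz
        exact hpt n z hz.1
    _ = a * I r + 2 * K * (I r - ∫ z, ‖g n z‖ ^ p ∂(μfam r)) := by
        rw [integral_add (hif.const_mul _) hsub, integral_const_mul, integral_const_mul,
          integral_sub hif hig]
    _ ≤ a * (N + 1) + 2 * K * (2 * δ) := by
        have h1 := hIS r hr
        gcongr <;> linarith
    _ ≤ η / 2 + η / 2 := by
        have e1 : a * (N + 1) = η / 2 := by rw [ha]; field_simp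
        have e2 : 4 * (K + 1) * δ = η / 2 := by rw [hδ]; field_simp; norm_num
        nlinarith
    _ = η := by ring


lemma dilate {Ω : Set ℂ} {ψ φ : ℂ → ℂ} (cm : CMap Ω ψ φ)
    {g : ℂ → ℂ} (hg : DifferentiableOn ℂ g Ω) {B : ℝ} (hB : ∀ z ∈ Ω, ‖g z‖ ≤ B)
    {S : Set ℂ} (hS : IsCompact S) (hSΩ : S ⊆ Ω) {ε : ℝ} (hε : 0 < ε) :
    ∃ G : ℂ → ℂ, ContinuousOn G (closure Ω) ∧ DifferentiableOn ℂ G Ω ∧ (∀ z ∈ Ω, ‖G z‖ ≤ B) ∧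
      ∀ z ∈ S, ‖G z - g z‖ ≤ ε := by
  have hψd : DifferentiableOn ℂ ψ (ball 0 1) := fun z hz =>
    (cm.ψd z (ball_subset_closedBall hz)).differentiableWithinAt
  set F : ℂ → ℂ := fun z => g (ψ z) with hF
  have hFd : DifferentiableOn ℂ F (ball 0 1) := hg.comp hψd cm.ψm
  have hφS : IsCompact (φ '' S) := hS.image_of_continuousOn (cm.φd.continuousOn.mono hSΩ)
  obtain ⟨ρ, hρ1, hρ⟩ : ∃ ρ < 1, φ '' S ⊆ closedBall (0:ℂ) ρ := by
    rcases S.eq_empty_or_nonempty with h | h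
    · exact ⟨0, one_pos, by simp [h]⟩
    · obtain ⟨w, hw, hmax⟩ := hφS.exists_isMaxOn (h.image φ) continuous_norm.continuousOn
      obtain ⟨x, hx, rfl⟩ := hw
      refine ⟨‖φ x‖, by simpa using cm.φm x (hSΩ hx), fun y hy => ?_⟩
      simpa using hmax hy
  have huc : UniformContinuousOn F (closedBall 0 ρ) :=
    (isCompact_closedBall (0:ℂ) ρ).uniformContinuousOn_of_continuous
      (hFd.continuousOn.mono (closedBall_subset_ball hρ1))
  obtain ⟨δ, hδ, hδF⟩ := Metric.uniformContinuousOn_iff.1 huc ε hε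
  set s := 1 - min δ 1 / 2 with hs
  have hm0 : 0 < min δ 1 := lt_min hδ one_pos
  have hm1 : min δ 1 ≤ 1 := min_le_right _ _
  have hmδ : min δ 1 ≤ δ := min_le_left _ _
  have hs0 : 0 < s := by rw [hs]; linarith
  have hs1 : s < 1 := by rw [hs]; linarith
  have hmem : ∀ w ∈ closure Ω, (s:ℂ) * φ w ∈ ball (0:ℂ) 1 := by
    intro w hw
    have : ‖φ w‖ ≤ 1 := by simpa using cm.φcm w hw
    simp [abs_of_pos hs0]
    nlinarith
  refine ⟨fun w => F (s * φ w), ?_, ?_, ?_, ?_⟩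
  · exact hFd.continuousOn.comp (continuousOn_const.mul cm.φc) hmem
  · exact hFd.comp ((differentiableOn_const _).mul cm.φd) fun w hw => hmem w (subset_closure hw)
  · intro z hz
    exact hB _ (cm.ψm _ (hmem z (subset_closure hz)))
  · intro z hz
    have h1 : φ z ∈ closedBall (0:ℂ) ρ := hρ ⟨z, hz, rfl⟩
    have hz1 : ‖φ z‖ < 1 := by simpa using cm.φm z (hSΩ hz)
    have hzρ : ‖φ z‖ ≤ ρ := by simpa using h1
    have h2 : (s:ℂ) * φ z ∈ closedBall (0:ℂ) ρ := by
      simp [abs_of_pos hs0]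
      nlinarith [norm_nonneg (φ z)]
    have h3 : dist ((s:ℂ) * φ z) (φ z) < δ := by
      rw [dist_eq_norm]
      have : (s:ℂ) * φ z - φ z = ((s - 1 : ℝ) : ℂ) * φ z := by push_cast; ring
      rw [this, norm_mul, Complex.norm_real, Real.norm_eq_abs, abs_of_neg (by linarith)]
      nlinarith [norm_nonneg (φ z)]
    have h4 := hδF _ h2 _ h1 h3
    rw [dist_eq_norm] at h4
    have h5 : F (φ z) = g z := by simp only [hF]; rw [cm.ψφ z (hSΩ hz)]
    rw [h5] at h4
    exact h4.le

lemma step2 {Ω : Set ℂ} (hO : IsOpen Ω) {ψ φ : ℂ → ℂ} (cm : CMap Ω ψ φ)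
    {u : ℂ → ℝ} (hu : IsExhaustion u Ω) {T : ℝ≥0∞} {μfam : ℝ → Measure ℂ} (M : MAP Ω u T μfam)
    {g : ℂ → ℂ} (hg : DifferentiableOn ℂ g Ω) {B : ℝ} (hB0 : 0 ≤ B) (hB : ∀ z ∈ Ω, ‖g z‖ ≤ B)
    {η : ℝ} (hη : 0 < η) :
    ∃ G : ℂ → ℂ, ContinuousOn G (closure Ω) ∧ DifferentiableOn ℂ G Ω ∧ (∀ z ∈ Ω, ‖G z‖ ≤ B) ∧
      ∀ r < 0, ∫ z, ‖G z - g z‖ ^ 2 ∂(μfam r) ≤ η := by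
  set J : ℝ → (ℂ → ℂ) → ℝ := fun r G => ∫ z, ‖G z‖ ^ 2 ∂(μfam r) with hJ
  have hJmono : ∀ G : ℂ → ℂ, DifferentiableOn ℂ G Ω → ∀ r r', r ≤ r' → r' < 0 → J r G ≤ J r' G := by
    intro G hG r r' hrr hr'
    have := MAP.mono_pow hO M hu hG (p := 2) two_pos hrr hr'
    simpa [hJ] using this
  have hfinm : ∀ r < 0, IsFiniteMeasure (μfam r) := fun r hr => ⟨(M.fin r hr).trans_lt M.hT⟩
  have hJ0 : ∀ r G, 0 ≤ J r G := fun r G => integral_nonneg fun z => by positivity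
  have hint : ∀ G : ℂ → ℂ, ContinuousOn G Ω → ∀ r < 0, Integrable (fun z => ‖G z‖ ^ 2) (μfam r) :=
    fun G hG r hr => M.integrable hu (hG.norm.pow 2) hr
  have hJb : ∀ G : ℂ → ℂ, DifferentiableOn ℂ G Ω → (∀ z ∈ Ω, ‖G z‖ ≤ B) → ∀ r < 0, J r G ≤ B ^ 2 * T.toReal := by
    intro G hG hGB r hr
    have := hfinm r hr
    calc J r G ≤ ∫ z, B ^ 2 ∂(μfam r) := by
          apply integral_mono_ae (hint G hG.continuousOn r hr) (integrable_const _)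
          filter_upwards [M.ae_mem hr] with z hz
          have := hGB z hz.1
          gcongr
      _ = B ^ 2 * (μfam r).real univ := by rw [integral_const]; simp [mul_comm]
      _ ≤ _ := by
          have h2 : (μfam r).real univ ≤ T.toReal := ENNReal.toReal_mono M.hT.ne (M.fin r hr)
          gcongr
  set C : ℕ → Set (ℂ → ℂ) := fun n => {G | ContinuousOn G (closure Ω) ∧ DifferentiableOn ℂ G Ω ∧
    (∀ z ∈ Ω, ‖G z‖ ≤ B) ∧ ∀ z, z ∈ Ω → u z ≤ -(1/((n:ℝ)+1)) → ‖G z - g z‖ ≤ 1/((n:ℝ)+1)} with hC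
  have hn0 : ∀ n : ℕ, 0 < 1/((n:ℝ)+1) := fun n => by positivity
  have hCne : ∀ n, (C n).Nonempty := by
    intro n
    obtain ⟨G, h1, h2, h3, h4⟩ := dilate cm hg hB (sub_compact hu (show -(1/((n:ℝ)+1)) < 0 by linarith [hn0 n]))
      (fun z hz => hz.1) (hn0 n)
    exact ⟨G, h1, h2, h3, fun z hz hz' => h4 z ⟨hz, hz'⟩⟩
  have hCanti : ∀ n k, n ≤ k → C k ⊆ C n := by
    rintro n k hnk G ⟨h1, h2, h3, h4⟩
    have : 1/((k:ℝ)+1) ≤ 1/((n:ℝ)+1) := by gcongr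
    exact ⟨h1, h2, h3, fun z hz hz' => (h4 z hz (by linarith)).trans this⟩
  have hCmid : ∀ n, ∀ G ∈ C n, ∀ G' ∈ C n, (fun z => (1/2:ℂ) * (G z + G' z)) ∈ C n := by
    rintro n G ⟨h1, h2, h3, h4⟩ G' ⟨h1', h2', h3', h4'⟩
    refine ⟨continuousOn_const.mul (h1.add h1'), (differentiableOn_const _).mul (h2.add h2'), ?_, ?_⟩
    · intro z hz
      have a1 := h3 z hz
      have a2 := h3' z hz
      have a3 := norm_add_le (G z) (G' z)
      rw [norm_mul]; norm_num; linarith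
    · intro z hz hz'
      have a1 := h4 z hz hz'
      have a2 := h4' z hz hz'
      have a3 := norm_add_le (G z - g z) (G' z - g z)
      have e : (1/2:ℂ) * (G z + G' z) - g z = (1/2:ℂ) * ((G z - g z) + (G' z - g z)) := by ring
      rw [e, norm_mul]
      have : ‖(1/2:ℂ)‖ = 1/2 := by norm_num
      rw [this]; linarith
  set Q : (ℂ → ℂ) → ℝ := fun G => sSup ((fun r => J r G) '' Iio 0) with hQ
  have hbdd : ∀ n, ∀ G ∈ C n, BddAbove ((fun r => J r G) '' Iio 0) := by
    rintro n G ⟨h1, h2, h3, h4⟩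
    exact ⟨B ^ 2 * T.toReal, by rintro _ ⟨r, hr, rfl⟩; exact hJb G h2 h3 r hr⟩
  have hnon : ∀ G, ((fun r => J r G) '' Iio 0).Nonempty := fun G => ⟨_, -1, by simp, rfl⟩
  have hJQ : ∀ n, ∀ G ∈ C n, ∀ r < 0, J r G ≤ Q G := fun n G hG r hr => le_csSup (hbdd n G hG) ⟨r, hr, rfl⟩
  have hQ0 : ∀ n, ∀ G ∈ C n, 0 ≤ Q G := fun n G hG => (hJ0 (-1) G).trans (hJQ n G hG (-1) (by norm_num))
  have hQb : ∀ n, ∀ G ∈ C n, Q G ≤ B ^ 2 * T.toReal := by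
    rintro n G ⟨h1, h2, h3, h4⟩
    exact csSup_le (hnon G) (by rintro _ ⟨r, hr, rfl⟩; exact hJb G h2 h3 r hr)
  have hpar : ∀ n, ∀ G ∈ C n, ∀ G' ∈ C n, ∀ r < 0,
      J r (fun z => (1/2:ℂ) * (G z - G' z)) ≤ (Q G + Q G')/2 - Q (fun z => (1/2:ℂ) * (G z + G' z)) := by
    intro n G hG G' hG' r hr
    have hmid := hCmid n G hG G' hG'
    rw [le_sub_comm]
    apply csSup_le (hnon _)
    rintro _ ⟨r', hr', rfl⟩
    have hr'' : r' < 0 := hr'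
    set R := max r r' with hR
    have hR0 : R < 0 := max_lt hr hr''
    have hGd := hG.2.1
    have hGd' := hG'.2.1
    have hdif : DifferentiableOn ℂ (fun z => (1/2:ℂ) * (G z - G' z)) Ω := (differentiableOn_const _).mul (hGd.sub hGd')
    have a1 := hJmono _ hmid.2.1 r' R (le_max_right _ _) hR0
    have a2 := hJmono _ hdif r R (le_max_left _ _) hR0
    have a3 := hJQ n G hG R hR0
    have a4 := hJQ n G' hG' R hR0
    have a5 : J R (fun z => (1/2:ℂ) * (G z + G' z)) + J R (fun z => (1/2:ℂ) * (G z - G' z)) = (J R G + J R G')/2 := by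
      simp only [hJ]
      rw [← integral_add (hint _ hmid.2.1.continuousOn R hR0) (hint _ hdif.continuousOn R hR0),
        ← integral_add (hint _ hGd.continuousOn R hR0) (hint _ hGd'.continuousOn R hR0), ← integral_div]
      congr 1
      ext z
      have := parallelogram_law_with_norm ℂ (G z) (G' z)
      rw [norm_mul, norm_mul]
      have e : ‖(1/2:ℂ)‖ = 1/2 := by norm_num
      rw [e]
      nlinarith
    simp only at a1 ⊢
    linarith
  set m : ℕ → ℝ := fun n => sInf (Q '' C n) with hm
  have hbelow : ∀ n, BddBelow (Q '' C n) := fun n => ⟨0, by rintro _ ⟨G, hG, rfl⟩; exact hQ0 n G hG⟩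
  have hmQ : ∀ n, ∀ G ∈ C n, m n ≤ Q G := fun n G hG => csInf_le (hbelow n) ⟨G, hG, rfl⟩
  have hmmono : Monotone m := fun n k hnk =>
    csInf_le_csInf (hbelow n) ((hCne k).image Q) (image_mono (hCanti n k hnk))
  have hmb : ∀ n, m n ≤ B ^ 2 * T.toReal := by
    intro n
    obtain ⟨G, hG⟩ := hCne n
    exact (hmQ n G hG).trans (hQb n G hG)
  have hmbdd : BddAbove (range m) := ⟨_, by rintro _ ⟨n, rfl⟩; exact hmb n⟩
  have hmtend := tendsto_atTop_ciSup hmmono hmbdd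
  set m' := ⨆ n, m n with hm'
  have hle' : ∀ n, m n ≤ m' := fun n => le_ciSup hmbdd n
  have hch : ∀ n, ∃ G ∈ C n, Q G < m n + 1/((n:ℝ)+1) := by
    intro n
    obtain ⟨_, ⟨G, hG, rfl⟩, h⟩ := exists_lt_of_csInf_lt ((hCne n).image Q) (show m n < m n + 1/((n:ℝ)+1) by linarith [hn0 n])
    exact ⟨G, hG, h⟩
  choose G hGC hGQ using hch
  have hsmall : ∀ n k, n ≤ k → ∀ r < 0, J r (fun z => (1/2:ℂ) * (G n z - G k z)) ≤ (m' - m n) + 1/((n:ℝ)+1) := by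
    intro n k hnk r hr
    have h1 := hpar n (G n) (hGC n) (G k) (hCanti n k hnk (hGC k)) r hr
    have h2 := hmQ n _ (hCmid n (G n) (hGC n) (G k) (hCanti n k hnk (hGC k)))
    have h3 := hGQ n
    have h4 := hGQ k
    have h5 : 1/((k:ℝ)+1) ≤ 1/((n:ℝ)+1) := by gcongr
    have h6 := hle' k
    have h7 := hle' n
    linarith
  have hlim : ∀ n, ∀ r < 0, J r (fun z => (1/2:ℂ) * (G n z - g z)) ≤ (m' - m n) + 1/((n:ℝ)+1) := by
    intro n r hr
    have hfm := hfinm r hr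
    have ht : Tendsto (fun k => J r (fun z => (1/2:ℂ) * (G n z - G k z))) atTop (𝓝 (J r (fun z => (1/2:ℂ) * (G n z - g z)))) := by
      apply tendsto_integral_of_dominated_convergence (fun _ => B ^ 2)
      · intro k
        exact (hint _ (continuousOn_const.mul ((hGC n).2.1.continuousOn.sub (hGC k).2.1.continuousOn)) r hr).aestronglyMeasurable
      · exact integrable_const _
      · intro k
        filter_upwards [M.ae_mem hr] with z hz
        rw [norm_pow, norm_norm, norm_mul]
        have e : ‖(1/2:ℂ)‖ = 1/2 := by norm_num
        rw [e]
        have a1 := (hGC n).2.2.1 z hz.1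
        have a2 := (hGC k).2.2.1 z hz.1
        have a3 := norm_sub_le (G n z) (G k z)
        gcongr
        linarith
      · filter_upwards [M.ae_mem hr] with z hz
        have hk : Tendsto (fun k => G k z) atTop (𝓝 (g z)) := by
          rw [tendsto_iff_norm_sub_tendsto_zero]
          have h0 := tendsto_one_div_add_atTop_nhds_zero_nat (𝕜 := ℝ)
          apply squeeze_zero' (Eventually.of_forall fun k => norm_nonneg _) _ h0
          filter_upwards [h0.eventually (gt_mem_nhds (show 0 < -r by linarith))] with k hk
          exact (hGC k).2.2.2 z hz.1 (by linarith [hz.2])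
        exact (((tendsto_const_nhds.sub hk).const_mul _).norm.pow 2)
    exact le_of_tendsto ht (by filter_upwards [eventually_ge_atTop n] with k hk using hsmall n k hk r hr)
  have hz : Tendsto (fun n : ℕ => 4 * ((m' - m n) + 1/((n:ℝ)+1))) atTop (𝓝 0) := by
    have := ((tendsto_const_nhds (x := m')).sub hmtend).add (tendsto_one_div_add_atTop_nhds_zero_nat (𝕜 := ℝ))
    simpa using this.const_mul 4
  obtain ⟨n, hn⟩ := (hz.eventually (gt_mem_nhds hη)).exists
  refine ⟨G n, (hGC n).1, (hGC n).2.1, (hGC n).2.2.1, fun r hr => ?_⟩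
  have h1 := hlim n r hr
  have h2 : ∫ z, ‖G n z - g z‖ ^ 2 ∂(μfam r) = 4 * J r (fun z => (1/2:ℂ) * (G n z - g z)) := by
    simp only [hJ]
    rw [← integral_const_mul]
    congr 1
    ext z
    have e : ‖(1/2:ℂ)‖ = 1/2 := by norm_num
    rw [norm_mul, e]; ring
  rw [h2]; linarith


lemma two_pow {p : ℝ} (hp : 0 < p) (x y : ℂ) : ‖x + y‖ ^ p ≤ 2 ^ p * (‖x‖ ^ p + ‖y‖ ^ p) := by
  have hx : 0 ≤ ‖x‖ ^ p := by positivity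
  have hy : 0 ≤ ‖y‖ ^ p := by positivity
  have h2 : (0:ℝ) < 2 ^ p := by positivity
  rcases le_total ‖x‖ ‖y‖ with h | h
  · calc ‖x + y‖ ^ p ≤ (2 * ‖y‖) ^ p := by
          gcongr; linarith [norm_add_le x y]
      _ = 2 ^ p * ‖y‖ ^ p := Real.mul_rpow (by norm_num) (norm_nonneg _)
      _ ≤ _ := by gcongr; linarith
  · calc ‖x + y‖ ^ p ≤ (2 * ‖x‖) ^ p := by
          gcongr; linarith [norm_add_le x y]
      _ = 2 ^ p * ‖x‖ ^ p := Real.mul_rpow (by norm_num) (norm_nonneg _)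
      _ ≤ _ := by gcongr; linarith

lemma step2p {Ω : Set ℂ} (hO : IsOpen Ω) {ψ φ : ℂ → ℂ} (cm : CMap Ω ψ φ)
    {u : ℂ → ℝ} (hu : IsExhaustion u Ω) {T : ℝ≥0∞} {μfam : ℝ → Measure ℂ} (M : MAP Ω u T μfam)
    {g : ℂ → ℂ} (hg : DifferentiableOn ℂ g Ω) {B : ℝ} (hB0 : 0 ≤ B) (hB : ∀ z ∈ Ω, ‖g z‖ ≤ B)
    {p : ℝ} (hp : 0 < p) {τ : ℝ} (hτ : 0 < τ) :
    ∃ G : ℂ → ℂ, ContinuousOn G (closure Ω) ∧ DifferentiableOn ℂ G Ω ∧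
      ∀ r < 0, ∫ z, ‖g z - G z‖ ^ p ∂(μfam r) ≤ τ := by
  have hT0 : 0 ≤ T.toReal := ENNReal.toReal_nonneg
  set a := τ / (2 * (T.toReal + 1)) with ha
  obtain ⟨K, hK0, hK⟩ := pow_interp hp (B := 2 * B) (by positivity) (show 0 < a by positivity)
  obtain ⟨G, h1, h2, h3, h4⟩ := step2 hO cm hu M hg hB0 hB (η := τ / (2 * (K + 1))) (by positivity)
  refine ⟨G, h1, h2, fun r hr => ?_⟩
  have hfm : IsFiniteMeasure (μfam r) := ⟨(M.fin r hr).trans_lt M.hT⟩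
  have hi2 : Integrable (fun z => ‖G z - g z‖ ^ 2) (μfam r) :=
    M.integrable hu ((h2.continuousOn.sub hg.continuousOn).norm.pow 2) hr
  have hip : Integrable (fun z => ‖g z - G z‖ ^ p) (μfam r) :=
    M.integrable hu ((hg.continuousOn.sub h2.continuousOn).norm.rpow_const fun _ _ => Or.inr hp.le) hr
  have hm : (μfam r).real univ ≤ T.toReal := ENNReal.toReal_mono M.hT.ne (M.fin r hr)
  calc ∫ z, ‖g z - G z‖ ^ p ∂(μfam r) ≤ ∫ z, (a + K * ‖G z - g z‖ ^ 2) ∂(μfam r) := by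
        apply integral_mono_ae hip ((integrable_const _).add (hi2.const_mul _))
        filter_upwards [M.ae_mem hr] with z hz
        rw [norm_sub_rev]
        apply hK _ (norm_nonneg _)
        have := norm_sub_le (G z) (g z)
        linarith [h3 z hz.1, hB z hz.1]
    _ = a * (μfam r).real univ + K * ∫ z, ‖G z - g z‖ ^ 2 ∂(μfam r) := by
        rw [integral_add (integrable_const _) (hi2.const_mul _), integral_const_mul, integral_const]
        simp [mul_comm]
    _ ≤ a * (T.toReal + 1) + (K + 1) * (τ / (2 * (K + 1))) := by
        have := h4 r hr
        have ha0 : 0 < a := by positivity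
        have : 0 ≤ ∫ z, ‖G z - g z‖ ^ 2 ∂(μfam r) := integral_nonneg fun z => by positivity
        gcongr <;> linarith
    _ = τ := by rw [ha]; field_simp; norm_num

lemma lint_eq {Ω : Set ℂ} {u : ℂ → ℝ} {T : ℝ≥0∞} {μfam : ℝ → Measure ℂ}
    (M : MAP Ω u T μfam) (hu : IsExhaustion u Ω) {f : ℂ → ℂ} (hf : ContinuousOn f Ω) {p : ℝ} (hp : 0 < p)
    {r : ℝ} (hr : r < 0) :
    ∫⁻ z, ENNReal.ofReal (‖f z‖ ^ p) ∂(μfam r) = ENNReal.ofReal (∫ z, ‖f z‖ ^ p ∂(μfam r)) := by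
  rw [ofReal_integral_eq_lintegral_ofReal]
  · exact M.integrable hu (hf.norm.rpow_const fun _ _ => Or.inr hp.le) hr
  · exact Eventually.of_forall fun z => by positivity

theorem stmt14 (Ω : Set ℂ) (hΩ : AnalyticJordanDomain Ω)
    (u : ℂ → ℝ) (hu : IsExhaustion u Ω)
    (ν : Measure ℂ) (hν : IsRieszMeasure u Ω ν) (hfin : ν Set.univ < ⊤)
    (μfam : ℝ → Measure ℂ) (hμ : ∀ r : ℝ, r < 0 → IsMAMeasure u Ω ν r (μfam r))
    (p : ℝ) (hp : 1 ≤ p) :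
    ∀ f : ℂ → ℂ, MemPS p Ω μfam f → ∀ ε : ℝ, 0 < ε →
      ∃ g : ℂ → ℂ, ContinuousOn g (closure Ω) ∧ DifferentiableOn ℂ g Ω ∧
        psNorm p μfam (fun z => f z - g z) < ENNReal.ofReal ε := by
  intro f hf ε hε
  have hO := hΩ.isOpen
  have hp0 : 0 < p := by linarith
  obtain ⟨ψ, φ, cm⟩ := exists_cmap hΩ
  have M := ma_props hO cm hu hν hfin hμ
  obtain ⟨hfd, hfn⟩ := hf
  have hN : ∃ N : ℝ, ∀ r < 0, ∫ z, ‖f z‖ ^ p ∂(μfam r) ≤ N := by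
    obtain ⟨c, hc1, hc2⟩ := exists_between hfn
    have hev := eventually_lt_of_limsup_lt hc1
    refine ⟨c.toReal, fun r hr => ?_⟩
    have h2 : ∀ᶠ r' in 𝓝[<] (0:ℝ), r' ∈ Ioo r 0 := Ioo_mem_nhdsLT hr
    obtain ⟨r', hr', hrr⟩ := (hev.and h2).exists
    rw [lint_eq M hu hfd.continuousOn hp0 hrr.2] at hr'
    refine (MAP.mono_pow hO M hu hfd hp0 hrr.1.le hrr.2).trans ?_
    exact (ENNReal.ofReal_le_iff_le_toReal hc2.ne).1 hr'.le
  obtain ⟨N, hN⟩ := hN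
  obtain ⟨H, hHd, hH⟩ := major_exists hO hΩ.isBounded cm hu M hfd hp hN
  set τ := (ε/2) ^ p / (2 * 2 ^ p) with hτ
  have hτ0 : 0 < τ := by positivity
  obtain ⟨g, hg, ⟨B, hB0, hB⟩, r0, hr0, hr⟩ := step1 hO hu M hfd hp hN hHd hH hτ0
  obtain ⟨G, hGc, hGd, hG⟩ := step2p hO cm hu M hg hB0 hB hp0 hτ0
  refine ⟨G, hGc, hGd, ?_⟩
  have hcc : ∀ {a b : ℂ → ℂ}, DifferentiableOn ℂ a Ω → DifferentiableOn ℂ b Ω →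
      ContinuousOn (fun z => a z - b z) Ω := fun ha hb => ha.continuousOn.sub hb.continuousOn
  have hI : ∀ r, r0 ≤ r → r < 0 → ∫ z, ‖f z - G z‖ ^ p ∂(μfam r) ≤ (ε/2) ^ p := by
    intro r hrr hr'
    have hi : ∀ {a b : ℂ → ℂ}, DifferentiableOn ℂ a Ω → DifferentiableOn ℂ b Ω →
      Integrable (fun z => ‖a z - b z‖ ^ p) (μfam r) := fun ha hb =>
      M.integrable hu ((hcc ha hb).norm.rpow_const fun _ _ => Or.inr hp0.le) hr'
    calc ∫ z, ‖f z - G z‖ ^ p ∂(μfam r)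
        ≤ ∫ z, 2 ^ p * (‖f z - g z‖ ^ p + ‖g z - G z‖ ^ p) ∂(μfam r) := by
          apply integral_mono (hi hfd hGd) (((hi hfd hg).add (hi hg hGd)).const_mul _)
          intro z
          have := two_pow hp0 (f z - g z) (g z - G z)
          rwa [sub_add_sub_cancel] at this
      _ = 2 ^ p * (∫ z, ‖f z - g z‖ ^ p ∂(μfam r) + ∫ z, ‖g z - G z‖ ^ p ∂(μfam r)) := by
          rw [integral_const_mul, integral_add (hi hfd hg) (hi hg hGd)]
      _ ≤ 2 ^ p * (τ + τ) := by
          have h1 := hr r hrr hr'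
          have h2 := hG r hr'
          gcongr
      _ = (ε/2) ^ p := by rw [hτ]; field_simp; norm_num
  have hlim : psNormPow p μfam (fun z => f z - G z) ≤ ENNReal.ofReal ((ε/2) ^ p) := by
    apply limsup_le_of_le
    · isBoundedDefault
    · have h2 : ∀ᶠ r' in 𝓝[<] (0:ℝ), r' ∈ Ioo r0 0 := Ioo_mem_nhdsLT hr0
      filter_upwards [h2] with r hrr
      rw [lint_eq M hu (hcc hfd hGd) hp0 hrr.2]
      exact ENNReal.ofReal_le_ofReal (hI r hrr.1.le hrr.2)
  have hlt : ENNReal.ofReal (ε/2) < ENNReal.ofReal ε := by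
    rw [ENNReal.ofReal_lt_ofReal_iff hε]; linarith
  refine lt_of_le_of_lt ?_ hlt
  calc psNorm p μfam (fun z => f z - G z) ≤ (ENNReal.ofReal ((ε/2) ^ p)) ^ (1/p) := by
        unfold psNorm
        exact ENNReal.rpow_le_rpow hlim (by positivity)
    _ = ENNReal.ofReal (ε/2) := by
        rw [ENNReal.ofReal_rpow_of_nonneg (by positivity) (by positivity), ← Real.rpow_mul (by positivity),
          mul_one_div_cancel hp0.ne', Real.rpow_one]

end
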